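/- arXiv:1309.0908 — 10 statements merged into one kernel-verified Lean document; each statement's English description precedes it below -/
import Mathlib

section
/- Let p be a prime and let 𝐬 = (s₁,…,s_k) be a composition. Then in the field ℚ_p of p-adic numbers, the family indexed by tuples (r₁,…,r_k) ∈ ℕ^k whose (r₁,…,r_k)-term is (∏_{j=1}^{k} C(s_j + r_j − 1, r_j)) · p^{r₁+⋯+r_k} · H_{p−1}(s_k + r_k, …, s₁ + r₁) is summable, and its sum equals (−1)^{s₁+⋯+s_k} · H_{p−1}(s₁,…,s_k). -/
/-- The multiple harmonic sum `H_n(s₁,…,s_k) = ∑_{n ≥ n₁ > … > n_k ≥ 1} 1/(n₁^{s₁} ⋯ n_k^{s_k})`,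
with `H_n(∅) = 1`. -/
def MHS : ℕ → List ℕ → ℚ
  | _, [] => 1
  | n, s :: t => ∑ m ∈ Finset.Icc 1 n, (1 / (m : ℚ) ^ s) * MHS (m - 1) t

/-!
The reflection `m ↦ n - m` of the summation range reverses the order of the indices, so
`H_{n-1}(s₁,…,s_k)` is the sum of `∏ 1 / (n - m_j) ^ s_j` over `n > m_k > ⋯ > m₁ ≥ 1`. When
`n = p ^ e`, each such `m` satisfies `‖n‖ < ‖m‖`, so that `1 / (m - n) ^ a` has the binomial
expansion `∑_r C(a + r - 1, r) n ^ r / m ^ (a + r)`. Since `ℚ_p` is nonarchimedean, these expansions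
may be multiplied together unconditionally, and summing the product over all `m` gives the identity.
-/

open Finset

theorem reverse_ofFn {α : Type*} {k : ℕ} (f : Fin k → α) :
    (List.ofFn f).reverse = List.ofFn fun j => f j.rev := by
  refine List.ext_getElem (by simp) fun i _ _ => ?_
  simp only [List.getElem_reverse, List.getElem_ofFn, List.length_ofFn]
  congr 1
  grind

section DecreasingTuples

open Classical in
/-- The tuples `n ≥ x₀ > x₁ > ⋯ > x_{k-1} ≥ 1` that index the multiple harmonic sums `H_n` of
depth `k`. -/
noncomputable def decreasingTuples (n k : ℕ) : Finset (Fin k → ℕ) :=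
  {x ∈ Fintype.piFinset fun _ => Icc 1 n | StrictAnti x}

variable {n k : ℕ}

theorem mem_decreasingTuples {x : Fin k → ℕ} :
    x ∈ decreasingTuples n k ↔ (∀ j, 1 ≤ x j ∧ x j ≤ n) ∧ StrictAnti x := by
  simp [decreasingTuples]

theorem cons_mem_decreasingTuples {m : ℕ} {x : Fin k → ℕ} :
    (Fin.cons m x : Fin (k + 1) → ℕ) ∈ decreasingTuples n (k + 1) ↔
      m ∈ Icc 1 n ∧ x ∈ decreasingTuples (m - 1) k := by
  simp only [mem_decreasingTuples, Fin.forall_fin_succ, StrictAnti, Fin.cons_zero, Fin.cons_succ,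
    mem_Icc, Fin.succ_lt_succ_iff, Fin.succ_pos, lt_irrefl, not_lt_zero]
  grind

section

variable {M : Type*} [AddCommMonoid M]

theorem sum_decreasingTuples_succ (F : (Fin (k + 1) → ℕ) → M) :
    ∑ x ∈ decreasingTuples n (k + 1), F x =
      ∑ m ∈ Icc 1 n, ∑ x ∈ decreasingTuples (m - 1) k, F (Fin.cons m x) := by
  rw [sum_sigma']
  refine sum_bij' (fun x _ => ⟨x 0, Fin.tail x⟩) (fun y _ => Fin.cons y.1 y.2) (fun x hx => ?_)
    (fun y hy => cons_mem_decreasingTuples.2 (mem_sigma.1 hy)) ?_ ?_ ?_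
  · rw [mem_sigma, ← cons_mem_decreasingTuples, Fin.cons_self_tail]
    exact hx
  all_goals simp

theorem sum_decreasingTuples_reflect (F : (Fin k → ℕ) → M) :
    ∑ x ∈ decreasingTuples n k, F (fun j => n + 1 - x j.rev) =
      ∑ x ∈ decreasingTuples n k, F x := by
  have hmem {x : Fin k → ℕ} (hx : x ∈ decreasingTuples n k) :
      (fun j => n + 1 - x (Fin.rev j)) ∈ decreasingTuples n k := by
    rw [mem_decreasingTuples] at hx ⊢
    refine ⟨fun j => by have := hx.1 j.rev; lia, fun i j hij => ?_⟩
    have := hx.1 i.rev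
    have := hx.2 (Fin.rev_lt_rev.2 hij)
    lia
  have hinv {x : Fin k → ℕ} (hx : x ∈ decreasingTuples n k) :
      (fun j => n + 1 - (n + 1 - x (Fin.rev (Fin.rev j)))) = x := by
    funext j
    have := (mem_decreasingTuples.1 hx).1 j
    rw [Fin.rev_rev]
    lia
  exact sum_nbij' (fun x j => n + 1 - x j.rev) (fun x j => n + 1 - x j.rev)
    (fun _ => hmem) (fun _ => hmem) (fun _ => hinv) (fun _ => hinv) (fun _ _ => rfl)

end

theorem MHS_ofFn (n : ℕ) (s : Fin k → ℕ) :
    MHS n (List.ofFn s) = ∑ x ∈ decreasingTuples n k, ∏ j, 1 / (x j : ℚ) ^ s j := by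
  induction k generalizing n with
  | zero => simp [MHS, decreasingTuples, Subsingleton.strictAnti]
  | succ k ih =>
    simp only [List.ofFn_succ, MHS, ih, sum_decreasingTuples_succ, Fin.prod_univ_succ, mul_sum,
      Fin.cons_zero, Fin.cons_succ]

theorem MHS_reverse_ofFn (n : ℕ) (s : Fin k → ℕ) :
    MHS n (List.ofFn s).reverse =
      ∑ x ∈ decreasingTuples n k, ∏ j, 1 / (x j.rev : ℚ) ^ s j := by
  rw [reverse_ofFn, MHS_ofFn]
  refine sum_congr rfl fun x _ => ?_
  rw [← Equiv.prod_comp Fin.revPerm]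
  simp only [Fin.revPerm_apply, Fin.rev_rev]

theorem neg_one_pow_mul_MHS_ofFn (n : ℕ) (s : Fin k → ℕ) :
    (-1) ^ (∑ j, s j) * MHS n (List.ofFn s) =
      ∑ x ∈ decreasingTuples n k, ∏ j, 1 / ((x j.rev : ℚ) - (n + 1 : ℕ)) ^ s j := by
  rw [MHS_ofFn, ← sum_decreasingTuples_reflect, mul_sum]
  refine sum_congr rfl fun x hx => ?_
  rw [← prod_pow_eq_pow_sum, ← prod_mul_distrib]
  refine prod_congr rfl fun j _ => ?_
  have hxj : x j.rev ≤ n + 1 := ((mem_decreasingTuples.1 hx).1 j.rev).2.trans n.le_succ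
  rw [Nat.cast_sub hxj, ← neg_sub, ← one_div_pow, ← mul_pow, one_div_neg_eq_neg_one_div,
    neg_one_mul, neg_neg, one_div_pow]

end DecreasingTuples

section NonarchimedeanProduct

variable {R : Type*} [CommRing R] [UniformSpace R] [IsUniformAddGroup R] [NonarchimedeanRing R]

theorem hasSum_prod_fin_pi_of_nonarchimedean {k : ℕ} {β : Fin k → Type*} {f : ∀ i, β i → R}
    {a : Fin k → R} (h : ∀ i, HasSum (f i) (a i)) :
    HasSum (fun x : ∀ i, β i => ∏ i, f i (x i)) (∏ i, a i) := by
  induction k with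
  | zero => simp
  | succ k ih =>
    rw [← (Fin.consEquiv β).hasSum_iff, Fin.prod_univ_succ]
    simpa [Function.comp_def, Fin.prod_univ_succ] using
      (h 0).mul_of_nonarchimedean (ih fun i => h i.succ)

theorem hasSum_prod_pi_of_nonarchimedean {ι : Type*} [Fintype ι] {β : ι → Type*}
    {f : ∀ i, β i → R} {a : ι → R} (h : ∀ i, HasSum (f i) (a i)) :
    HasSum (fun x : ∀ i, β i => ∏ i, f i (x i)) (∏ i, a i) := by
  let e := (Fintype.equivFin ι).symm
  rw [← (Equiv.piCongrLeft β e).hasSum_iff, ← e.prod_comp]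
  simpa [Function.comp_def, ← e.prod_comp] using
    hasSum_prod_fin_pi_of_nonarchimedean fun j => h (e j)

end NonarchimedeanProduct

section NegativeBinomialSeries

variable {K : Type*} [NormedField K]

theorem hasSum_multichoose_mul_pow (a : ℕ) {x : K} (hx : ‖x‖ < 1) :
    HasSum (fun r : ℕ => (a.multichoose r : K) * x ^ r) (1 / (1 - x) ^ a) := by
  cases a with
  | zero =>
    convert! hasSum_ite_eq 0 (1 : K) using 1
    · ext (_ | r) <;> simp
    · simp
  | succ a =>
    convert! hasSum_choose_mul_geometric_of_norm_lt_one a hx using 4 with r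
    rw [Nat.multichoose_eq, ← Nat.choose_symm_add]
    grind

theorem hasSum_multichoose_mul_pow_mul_one_div_pow (a : ℕ) {x y : K} (h : ‖x‖ < ‖y‖) :
    HasSum (fun r : ℕ => (a.multichoose r : K) * x ^ r * (1 / y ^ (a + r))) (1 / (y - x) ^ a) := by
  have hy : y ≠ 0 := norm_pos_iff.1 ((norm_nonneg x).trans_lt h)
  have hxy : ‖x / y‖ < 1 := by rwa [norm_div, div_lt_one (norm_pos_iff.2 hy)]
  convert! (hasSum_multichoose_mul_pow a hxy).mul_right (1 / y ^ a) using 1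
  · funext r
    rw [div_pow, pow_add]
    field_simp
  · rw [one_sub_div hy, div_pow]
    field_simp

end NegativeBinomialSeries

theorem norm_prime_pow_lt_norm_natCast {p : ℕ} [Fact p.Prime] {e m : ℕ} (hm : 0 < m)
    (hme : m < p ^ e) : ‖(p : ℚ_[p]) ^ e‖ < ‖(m : ℚ_[p])‖ := by
  have hdvd : ¬ (p ^ e : ℤ) ∣ m := mod_cast Nat.not_dvd_of_pos_of_lt hm hme
  rw [← Padic.norm_int_le_pow_iff_dvd] at hdvd
  simpa using hdvd

theorem asymptotic_reversal_general (p : ℕ) [Fact p.Prime] (e : ℕ) {k : ℕ} (s : Fin k → ℕ) :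
    HasSum
      (fun r : Fin k → ℕ =>
        (∏ j, ((s j).multichoose (r j) : ℚ_[p])) * ((p : ℚ_[p]) ^ e) ^ (∑ j, r j) *
          (MHS (p ^ e - 1) (List.ofFn fun j => s j + r j).reverse : ℚ_[p]))
      ((-1) ^ (∑ j, s j) * (MHS (p ^ e - 1) (List.ofFn s) : ℚ_[p])) := by
  have : NonarchimedeanRing ℚ_[p] := ⟨NonarchimedeanAddGroup.is_nonarchimedean⟩
  have hpe : p ^ e - 1 + 1 = p ^ e := Nat.sub_add_cancel NeZero.one_le
  have hexpand {x : Fin k → ℕ} (hx : x ∈ decreasingTuples (p ^ e - 1) k) (j : Fin k) :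
      HasSum
        (fun r : ℕ => ((s j).multichoose r : ℚ_[p]) * ((p : ℚ_[p]) ^ e) ^ r *
          (1 / (x j.rev : ℚ_[p]) ^ (s j + r)))
        (1 / ((x j.rev : ℚ_[p]) - (p : ℚ_[p]) ^ e) ^ s j) := by
    obtain ⟨hpos, hle⟩ := (mem_decreasingTuples.1 hx).1 j.rev
    exact hasSum_multichoose_mul_pow_mul_one_div_pow (s j)
      (norm_prime_pow_lt_norm_natCast hpos (by lia))
  convert! hasSum_sum fun x hx => hasSum_prod_pi_of_nonarchimedean (hexpand hx) using 1
  · funext r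
    simp [MHS_reverse_ofFn, prod_mul_distrib, mul_sum, prod_pow_eq_pow_sum]
  · simpa [hpe] using congrArg ((↑) : ℚ → ℚ_[p]) (neg_one_pow_mul_MHS_ofFn (p ^ e - 1) s)

/-- **Asymptotic Reversal Theorem.** Let `p` be a prime and `s = (s₁,…,s_k)` a composition.
In `ℚ_p`, the family indexed by tuples `(r₁,…,r_k) ∈ ℕ^k` whose term is
`(∏_j C(s_j + r_j − 1, r_j)) p^{r₁+⋯+r_k} H_{p−1}(s_k + r_k, …, s₁ + r₁)` is summable, with sum
`(−1)^{s₁+⋯+s_k} H_{p−1}(s₁,…,s_k)`. -/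
theorem asymptotic_reversal (p : ℕ) [Fact p.Prime] (s : List ℕ) (hs : ∀ i ∈ s, 0 < i) :
    HasSum
      (fun r : Fin s.length → ℕ =>
        ((∏ j : Fin s.length, ((s.get j + r j - 1).choose (r j)) : ℕ) : ℚ_[p]) *
          (p : ℚ_[p]) ^ (∑ j : Fin s.length, r j) *
          ((MHS (p - 1) ((List.ofFn fun j : Fin s.length => s.get j + r j).reverse) : ℚ) : ℚ_[p]))
      ((-1) ^ s.sum * ((MHS (p - 1) s : ℚ) : ℚ_[p])) := by
  simpa [Nat.multichoose_eq, ← List.sum_ofFn] using asymptotic_reversal_general p 1 s.get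
end

section
/- For every prime p and every composition 𝐬 = (s₁,…,s_k), the congruence H_{p−1}(s₁,…,s_k) ≡ (−1)^{s₁+⋯+s_k} H_{p−1}(s_k,…,s₁) (mod p) holds; that is, the p-adic valuation of H_{p−1}(s₁,…,s_k) − (−1)^{s₁+⋯+s_k} H_{p−1}(s_k,…,s₁) is at least 1. -/
/-!
In `ZMod p` the substitution `m ↦ p - m` multiplies `1 / m ^ s` by `(-1) ^ s` and reverses the
order of the summation indices, so it turns the sum for `(s₁, …, s_k)` into
`(-1) ^ (s₁ + ⋯ + s_k)` times the sum for `(s_k, …, s₁)`. The congruence follows because every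
denominator is prime to `p`, so the sums already live in `ℤ_[p]`.
-/

section NestedSum

variable {σ R S : Type*}

/-- The nested sum `∑_{b > m₁ > ⋯ > m_k > a} w s₁ m₁ ⋯ w s_k m_k`, with value `1` on the empty list.
Both bounds are strict, so that reflecting the range of summation exchanges their roles. -/
def nestedSum [Semiring R] (w : σ → ℕ → R) (a : ℕ) : ℕ → List σ → R
  | _, [] => 1
  | b, s :: t => ∑ m ∈ Finset.Ioo a b, w s m * nestedSum w a m t

theorem nestedSum_append_singleton [Semiring R] (w : σ → ℕ → R) (a b : ℕ) (t : List σ) (s : σ) :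
    nestedSum w a b (t ++ [s]) = ∑ m ∈ Finset.Ioo a b, nestedSum w m b t * w s m := by
  induction t generalizing b with
  | nil => simp only [List.nil_append, nestedSum, mul_one, one_mul]
  | cons u t ih =>
    simp only [List.cons_append, nestedSum, ih, Finset.mul_sum, Finset.sum_mul, mul_assoc]
    refine Finset.sum_comm' fun m l => ?_
    simp only [Finset.mem_Ioo]
    omega

theorem map_nestedSum [Semiring R] [Semiring S] (φ : R →+* S) {w : σ → ℕ → R} {v : σ → ℕ → S}
    {a b : ℕ} (h : ∀ s, ∀ m ∈ Finset.Ioo a b, φ (w s m) = v s m) (t : List σ) :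
    φ (nestedSum w a b t) = nestedSum v a b t := by
  induction t generalizing b with
  | nil => simp only [nestedSum, map_one]
  | cons s t ih =>
    simp only [nestedSum, map_sum, map_mul]
    refine Finset.sum_congr rfl fun m hm => ?_
    have subset : Finset.Ioo a m ⊆ Finset.Ioo a b :=
      Finset.Ioo_subset_Ioo_right (Finset.mem_Ioo.1 hm).2.le
    rw [h s m hm, ih fun s l hl => h s l (subset hl)]

theorem nestedSum_reverse_reflect [CommSemiring R] {w : σ → ℕ → R} {c : σ → R} {N : ℕ}
    (hw : ∀ s, ∀ m ≤ N, w s (N - m) = c s * w s m) {a b : ℕ} (hb : b ≤ N) (t : List σ) :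
    nestedSum w (N - b) (N - a) t.reverse = (t.map c).prod * nestedSum w a b t := by
  induction t generalizing b with
  | nil => simp only [List.reverse_nil, List.map_nil, List.prod_nil, nestedSum, mul_one]
  | cons s t ih =>
    simp only [List.reverse_cons, nestedSum_append_singleton, nestedSum, List.map_cons,
      List.prod_cons, Finset.mul_sum]
    symm
    refine Finset.sum_bij' (fun m _ => N - m) (fun m _ => N - m) (by grind) (by grind) (by grind)
      (by grind) fun m hm => ?_
    have hmN : m ≤ N := (Finset.mem_Ioo.1 hm).2.le.trans hb
    rw [ih hmN, hw s m hmN]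
    ring

end NestedSum

theorem ringInverse_neg {M : Type*} [MonoidWithZero M] [HasDistribNeg M] (x : M) :
    Ring.inverse (-x) = -Ring.inverse x := by
  have inverse_neg_one : Ring.inverse (-1 : M) = -1 := by
    simpa using Ring.inverse_unit (-1 : Mˣ)
  rw [← neg_one_mul, Ring.inverse_mul (.inl isUnit_one.neg), inverse_neg_one, mul_neg_one]

theorem map_ringInverse {F M N : Type*} [MonoidWithZero M] [MonoidWithZero N] [FunLike F M N]
    [MonoidHomClass F M N] (φ : F) {x : M} (hx : IsUnit x) :
    φ (Ring.inverse x) = Ring.inverse (φ x) := by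
  obtain ⟨u, rfl⟩ := hx
  rw [Ring.inverse_unit]
  exact (Ring.inverse_unit (Units.map (φ : M →* N) u)).symm

theorem list_prod_map_pow {M : Type*} [Monoid M] (x : M) (t : List ℕ) :
    (t.map (x ^ ·)).prod = x ^ t.sum := by
  induction t with
  | nil => simp only [List.map_nil, List.prod_nil, List.sum_nil, pow_zero]
  | cons s t ih => rw [List.map_cons, List.prod_cons, List.sum_cons, pow_add, ih]

section HarmonicSum

variable {R S : Type*}

/-- The multiple harmonic sum `∑_{b > m₁ > ⋯ > m_k > a} 1 / (m₁ ^ s₁ ⋯ m_k ^ s_k)` with values in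
a semiring `R`. Reciprocals are taken by `Ring.inverse`, which is `0` on non-units, so that the same
expression makes sense in `ℚ`, `ℚ_[p]`, `ℤ_[p]` and `ZMod p`. -/
noncomputable def harmonicSum (R : Type*) [Semiring R] (a b : ℕ) (t : List ℕ) : R :=
  nestedSum (fun s m => Ring.inverse (m : R) ^ s) a b t

theorem map_harmonicSum [Semiring R] [Semiring S] (φ : R →+* S) {a b : ℕ}
    (h : ∀ m ∈ Finset.Ioo a b, IsUnit (m : R)) (t : List ℕ) :
    φ (harmonicSum R a b t) = harmonicSum S a b t :=
  map_nestedSum φ (fun s m hm => by rw [map_pow, map_ringInverse φ (h m hm), map_natCast]) t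

theorem harmonicSum_reverse_reflect [CommRing R] {N : ℕ} (hN : (N : R) = 0) {a b : ℕ}
    (hb : b ≤ N) (t : List ℕ) :
    harmonicSum R (N - b) (N - a) t.reverse = (-1) ^ t.sum * harmonicSum R a b t := by
  rw [← list_prod_map_pow]
  refine nestedSum_reverse_reflect (fun s m hm => ?_) hb t
  rw [Nat.cast_sub hm, hN, zero_sub, ringInverse_neg, neg_pow]

theorem MHS_eq_harmonicSum (n : ℕ) (t : List ℕ) : MHS n t = harmonicSum ℚ 0 (n + 1) t := by
  induction t generalizing n with
  | nil => rfl
  | cons s t ih =>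
    have range_eq : Finset.Icc 1 n = Finset.Ioo 0 (n + 1) := by grind
    rw [MHS, harmonicSum, nestedSum, range_eq]
    refine Finset.sum_congr rfl fun m hm => ?_
    rw [ih, Nat.sub_add_cancel (Finset.mem_Ioo.1 hm).1, harmonicSum, Ring.inverse_eq_inv, inv_pow,
      one_div]

end HarmonicSum

section Padic

variable {p : ℕ} [Fact p.Prime]

theorem isUnit_natCast_padicInt_of_mem_Ioo {a b m : ℕ} (hb : b ≤ p) (hm : m ∈ Finset.Ioo a b) :
    IsUnit (m : ℤ_[p]) := by
  obtain ⟨ham, hmb⟩ := Finset.mem_Ioo.1 hm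
  rw [PadicInt.isUnit_iff, PadicInt.norm_natCast_eq_one_iff]
  exact Nat.coprime_of_lt_prime (Nat.ne_zero_of_lt ham) (hmb.trans_le hb) Fact.out

theorem coe_harmonicSum_padicInt {a b : ℕ} (hb : b ≤ p) (t : List ℕ) :
    (harmonicSum ℤ_[p] a b t : ℚ_[p]) = (harmonicSum ℚ a b t : ℚ) := by
  have isUnit_rat : ∀ m ∈ Finset.Ioo a b, IsUnit (m : ℚ) := fun m hm =>
    (Nat.cast_ne_zero.2 (Nat.ne_zero_of_lt (Finset.mem_Ioo.1 hm).1)).isUnit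
  calc (harmonicSum ℤ_[p] a b t : ℚ_[p])
      = harmonicSum ℚ_[p] a b t :=
        map_harmonicSum PadicInt.Coe.ringHom
          (fun _ hm => isUnit_natCast_padicInt_of_mem_Ioo hb hm) t
    _ = (harmonicSum ℚ a b t : ℚ) := (map_harmonicSum (Rat.castHom ℚ_[p]) isUnit_rat t).symm

theorem toZMod_harmonicSum_reverse_reflect {a b : ℕ} (hb : b ≤ p) (t : List ℕ) :
    PadicInt.toZMod (harmonicSum ℤ_[p] (p - b) (p - a) t.reverse) =
      (-1) ^ t.sum * PadicInt.toZMod (harmonicSum ℤ_[p] a b t) := by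
  rw [map_harmonicSum _ fun _ => isUnit_natCast_padicInt_of_mem_Ioo (p.sub_le a),
    map_harmonicSum _ fun _ => isUnit_natCast_padicInt_of_mem_Ioo hb,
    harmonicSum_reverse_reflect (ZMod.natCast_self p) hb]

theorem norm_le_zpow_neg_one_iff_toZMod_eq_zero (x : ℤ_[p]) :
    ‖x‖ ≤ (p : ℝ) ^ (-1 : ℤ) ↔ PadicInt.toZMod x = 0 := by
  rw [← RingHom.mem_ker, PadicInt.ker_toZMod, PadicInt.maximalIdeal_eq_span_p]
  simpa only [Nat.cast_one, pow_one] using PadicInt.norm_le_pow_iff_mem_span_pow x 1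

end Padic

/-- For every prime `p` and every composition `s = (s₁,…,s_k)` (a list of positive integers),
`H_{p-1}(s₁,…,s_k) ≡ (-1)^{s₁+⋯+s_k} H_{p-1}(s_k,…,s₁) (mod p)`: the `p`-adic valuation of the
difference is at least `1`. -/
theorem mhs_reversal_mod_p (p : ℕ) [Fact p.Prime] (s : List ℕ) (hs : ∀ i ∈ s, 0 < i) :
    ‖((MHS (p - 1) s - (-1) ^ s.sum * MHS (p - 1) s.reverse : ℚ) : ℚ_[p])‖
      ≤ (p : ℝ) ^ (-1 : ℤ) := by
  let x := harmonicSum ℤ_[p] 0 p s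
  let y := harmonicSum ℤ_[p] 0 p s.reverse
  have coe_eq_MHS (t : List ℕ) : (harmonicSum ℤ_[p] 0 p t : ℚ_[p]) = (MHS (p - 1) t : ℚ) := by
    rw [MHS_eq_harmonicSum, Nat.sub_add_cancel (Fact.out : p.Prime).one_le,
      coe_harmonicSum_padicInt le_rfl]
  have lift : ((MHS (p - 1) s - (-1) ^ s.sum * MHS (p - 1) s.reverse : ℚ) : ℚ_[p]) =
      (x - (-1) ^ s.sum * y : ℤ_[p]) := by
    push_cast
    rw [coe_eq_MHS, coe_eq_MHS]
  have reversal : PadicInt.toZMod y = (-1) ^ s.sum * PadicInt.toZMod x := by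
    simpa only [Nat.sub_self, Nat.sub_zero] using
      toZMod_harmonicSum_reverse_reflect (p := p) (a := 0) le_rfl s
  have sign_sq : (-1 : ZMod p) ^ s.sum * (-1) ^ s.sum = 1 := by
    rw [← mul_pow, neg_one_mul, neg_neg, one_pow]
  rw [lift, ← PadicInt.norm_def, norm_le_zpow_neg_one_iff_toZMod_eq_zero, map_sub, map_mul,
    map_pow, map_neg, map_one, reversal, ← mul_assoc, sign_sq, one_mul, sub_self]
end

section
/- Let p and n be integers with 1 ≤ n ≤ p. Then the following identity holds in ℚ: C(p, n) = (−1)^{n+1} · (p/n) · ∑_{j=0}^{n−1} (−1)^j p^j H_{n−1}({1}^j), where {1}^j denotes the composition consisting of j ones. -/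
/-!
The numbers `H_m({1}^j)` are the elementary symmetric functions of `1, 1/2, …, 1/m`, so their
generating function `∑ j, H_m({1}^j) x^j` is the product of the `1 + x / k` for `1 ≤ k ≤ m`. At `-x`
the factors become `-(x - k) / k`, so up to sign the product is `C(x - 1, m)`, and multiplying by
`x / (m + 1)` gives `C(x, m + 1)`. This is a polynomial identity in `x`.
-/

open Finset

namespace MHS

theorem succ_cons (n s : ℕ) (t : List ℕ) :
    MHS (n + 1) (s :: t) = MHS n (s :: t) + 1 / (n + 1 : ℚ) ^ s * MHS n t := by
  simp only [MHS]
  rw [sum_Icc_succ_top (Nat.le_add_left 1 n), Nat.cast_succ, Nat.add_sub_cancel]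

theorem eq_zero_of_lt_length {n : ℕ} {l : List ℕ} (h : n < l.length) : MHS n l = 0 := by
  induction l generalizing n with
  | nil => exact absurd h (Nat.not_lt_zero n)
  | cons s t ih =>
    rw [MHS]
    refine sum_eq_zero fun m hm => ?_
    have hlt : m - 1 < t.length := by
      rw [mem_Icc] at hm
      rw [List.length_cons] at h
      lia
    rw [ih hlt, mul_zero]

section GeneratingFunction

variable {A : Type*} [Semiring A] [Algebra ℚ A]

/-- The generating function `∑_{j ≥ 0} H_n({1}^j) x^j` of the multiple harmonic sums with all
exponents `1`, evaluated at an element `x` of a `ℚ`-algebra. The sum stops at `j = n` because the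
later coefficients vanish. -/
def onesGenFun (n : ℕ) (x : A) : A :=
  ∑ j ∈ range (n + 1), MHS n (List.replicate j 1) • x ^ j

@[simp]
theorem onesGenFun_zero (x : A) : onesGenFun 0 x = 1 := by
  simp [onesGenFun, MHS]

theorem onesGenFun_eq_sum_range {n N : ℕ} (hN : n < N) (x : A) :
    onesGenFun n x = ∑ j ∈ range N, MHS n (List.replicate j 1) • x ^ j := by
  refine sum_subset (range_subset_range.2 hN) fun j _ hj => ?_
  have hlt : n < (List.replicate j 1).length := by
    rw [List.length_replicate]
    exact not_lt.1 (mt mem_range.2 hj)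
  rw [eq_zero_of_lt_length hlt, zero_smul]

theorem onesGenFun_eq_sum_range_succ_add_one {n N : ℕ} (hN : n ≤ N) (x : A) :
    onesGenFun n x =
      ∑ j ∈ range N, MHS n (List.replicate (j + 1) 1) • x ^ (j + 1) + 1 := by
  rw [onesGenFun_eq_sum_range (Nat.lt_succ_of_le hN), sum_range_succ']
  simp only [List.replicate_zero, MHS, pow_zero, one_smul]

theorem onesGenFun_succ (n : ℕ) (x : A) :
    onesGenFun (n + 1) x = onesGenFun n x * (1 + (n + 1 : ℚ)⁻¹ • x) := by
  have coeff_succ (j : ℕ) : MHS (n + 1) (List.replicate (j + 1) 1) =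
      MHS n (List.replicate (j + 1) 1) + (n + 1 : ℚ)⁻¹ * MHS n (List.replicate j 1) := by
    rw [List.replicate_succ, succ_cons, pow_one, one_div]
  calc onesGenFun (n + 1) x
      = ∑ j ∈ range (n + 1), MHS (n + 1) (List.replicate (j + 1) 1) • x ^ (j + 1) + 1 :=
        onesGenFun_eq_sum_range_succ_add_one le_rfl x
    _ = (∑ j ∈ range (n + 1), MHS n (List.replicate (j + 1) 1) • x ^ (j + 1) + 1) +
          ∑ j ∈ range (n + 1), (n + 1 : ℚ)⁻¹ • (MHS n (List.replicate j 1) • x ^ j * x) := by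
        simp only [coeff_succ, add_smul, mul_smul, pow_succ, smul_mul_assoc, sum_add_distrib]
        exact add_right_comm _ _ _
    _ = onesGenFun n x + (n + 1 : ℚ)⁻¹ • (onesGenFun n x * x) := by
        rw [← onesGenFun_eq_sum_range_succ_add_one n.le_succ, ← smul_sum, ← sum_mul, ← onesGenFun]
    _ = onesGenFun n x * (1 + (n + 1 : ℚ)⁻¹ • x) := by
        rw [mul_add, mul_one, mul_smul_comm]

end GeneratingFunction

end MHS

theorem succ_nsmul_ringChoose_succ {R : Type*} [NonAssocRing R] [Pow R ℕ] [NatPowAssoc R]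
    [BinomialRing R] (x : R) (n : ℕ) :
    (n + 1) • Ring.choose x (n + 1) = Ring.choose x n * (x - n) := by
  have h := Ring.choose_smul_choose x n.le_succ
  rwa [Nat.choose_succ_self_right, Nat.succ_sub n.le_refl, Nat.sub_self, Ring.choose_one_right] at h

section RingChoose

variable {A : Type*} [Ring A] [Algebra ℚ A] [BinomialRing A]

theorem ringChoose_succ_eq_inv_smul (x : A) (n : ℕ) :
    Ring.choose x (n + 1) = (n + 1 : ℚ)⁻¹ • (Ring.choose x n * (x - n)) := by
  rw [eq_inv_smul_iff₀ n.cast_add_one_ne_zero, ← succ_nsmul_ringChoose_succ, ← Nat.cast_succ,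
    Nat.cast_smul_eq_nsmul]

theorem ringChoose_succ_eq_onesGenFun (x : A) (n : ℕ) :
    Ring.choose x (n + 1) = (-1) ^ n * ((n + 1 : ℚ)⁻¹ • x) * MHS.onesGenFun n (-x) := by
  induction n with
  | zero => simp
  | succ n ih =>
    have linear_factor : (n + 1 : ℚ)⁻¹ • (x - (n + 1 : ℕ)) = -(1 + (n + 1 : ℚ)⁻¹ • -x) := by
      have cast_eq_smul : ((n + 1 : ℕ) : A) = (n + 1 : ℚ) • 1 := by
        rw [← Nat.cast_succ, Nat.cast_smul_eq_nsmul, nsmul_one]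
      rw [cast_eq_smul, smul_sub, inv_smul_smul₀ n.cast_add_one_ne_zero, smul_neg, neg_add',
        sub_neg_eq_add, sub_eq_neg_add]
    calc Ring.choose x (n + 1 + 1)
        = ((n + 1 : ℕ) + 1 : ℚ)⁻¹ • ((-1) ^ n * x * MHS.onesGenFun n (-x) *
            ((n + 1 : ℚ)⁻¹ • (x - (n + 1 : ℕ)))) := by
          rw [ringChoose_succ_eq_inv_smul, ih]
          simp only [mul_smul_comm, smul_mul_assoc]
      _ = ((n + 1 : ℕ) + 1 : ℚ)⁻¹ • ((-1) ^ (n + 1) * x * MHS.onesGenFun (n + 1) (-x)) := by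
          rw [linear_factor, MHS.onesGenFun_succ, pow_succ]
          simp only [mul_neg, neg_mul, mul_one, mul_assoc]
      _ = (-1) ^ (n + 1) * (((n + 1 : ℕ) + 1 : ℚ)⁻¹ • x) * MHS.onesGenFun (n + 1) (-x) := by
          rw [mul_smul_comm, smul_mul_assoc]

theorem choose_eq_weighted_mhs_sum_general (x : A) (n : ℕ) (hn : 1 ≤ n) :
    Ring.choose x n =
      (-1) ^ (n + 1) * ((n : ℚ)⁻¹ • x) *
        ∑ j ∈ range n, MHS (n - 1) (List.replicate j 1) • ((-1) ^ j * x ^ j) := by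
  obtain ⟨m, rfl⟩ := Nat.exists_eq_add_of_le' hn
  have sign : (-1 : A) ^ (m + 1 + 1) = (-1) ^ m := by
    rw [pow_succ, pow_succ, mul_neg_one, mul_neg_one, neg_neg]
  rw [sign, Nat.cast_succ, Nat.add_sub_cancel, ringChoose_succ_eq_onesGenFun, MHS.onesGenFun]
  simp only [neg_pow x]

end RingChoose

/-- For integers `1 ≤ n ≤ p`, one has
`C(p,n) = (−1)^{n+1} (p/n) ∑_{j=0}^{n−1} (−1)^j p^j H_{n−1}({1}^j)` in `ℚ`. -/
theorem choose_eq_weighted_mhs_sum (p n : ℕ) (h1 : 1 ≤ n) (h2 : n ≤ p) :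
    (p.choose n : ℚ) =
      (-1) ^ (n + 1) * ((p : ℚ) / (n : ℚ)) *
        ∑ j ∈ Finset.range n, (-1) ^ j * (p : ℚ) ^ j * MHS (n - 1) (List.replicate j 1) := by
  simpa only [Ring.choose_natCast, smul_eq_mul, inv_mul_eq_div, mul_comm (MHS _ _)] using
    choose_eq_weighted_mhs_sum_general (p : ℚ) n h1
end

section
/- For every prime p ≥ 5, the congruence H_{p−1}(1) ≡ 0 (mod p²) holds; that is, the p-adic valuation of the harmonic sum H_{p−1}(1) = ∑_{m=1}^{p−1} 1/m is at least 2. (Wolstenholme's Theorem.) -/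
/-!
For odd `s`, pairing `m` with `p - m` in `2 H_{p-1}(s)` extracts a first factor of `p`, because
`x + y` divides `x ^ s + y ^ s`. Modulo `p`, where `p - m ≡ -m`, the cofactor collapses to
`-s ∑ m ^ (-(s + 1))`, and this power sum over `(ℤ/p)ˣ` vanishes as soon as `p - 1` does not divide
`s + 1`, which supplies the second factor.
-/

open Finset

theorem MHS_singleton (n s : ℕ) : MHS n [s] = ∑ m ∈ Icc 1 n, ((m : ℚ)⁻¹) ^ s := by
  simp only [MHS, mul_one, one_div, inv_pow]

section Reflection

variable {R : Type*} [CommRing R] {s : ℕ}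

theorem inv_pow_add_inv_pow_of_odd {x y a b : R} (ha : x * a = 1) (hb : y * b = 1) (hs : Odd s) :
    a ^ s + b ^ s = (x + y) * (a * b * ∑ i ∈ range s, a ^ i * (-b) ^ (s - 1 - i)) := by
  have add_inv : a + b = (x + y) * (a * b) := by
    linear_combination (-b) * ha - a * hb
  calc a ^ s + b ^ s = a ^ s - (-b) ^ s := by rw [hs.neg_pow, sub_neg_eq_add]
    _ = (∑ i ∈ range s, a ^ i * (-b) ^ (s - 1 - i)) * (a + b) := by
      rw [← (Commute.all a (-b)).geom_sum₂_mul, sub_neg_eq_add]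
    _ = _ := by rw [add_inv]; ring

theorem two_mul_sum_Ico_inv_pow {n : ℕ} {u : ℕ → R}
    (hu : ∀ m ∈ Ico 1 n, (m : R) * u m = 1) (hs : Odd s) :
    2 * ∑ m ∈ Ico 1 n, u m ^ s = n * ∑ m ∈ Ico 1 n,
      u m * u (n - m) * ∑ i ∈ range s, u m ^ i * (-u (n - m)) ^ (s - 1 - i) := by
  have reflect : ∑ m ∈ Ico 1 n, u (n - m) ^ s = ∑ m ∈ Ico 1 n, u m ^ s := by
    simpa using sum_Ico_reflect (fun m ↦ u m ^ s) 1 n.le_succ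
  rw [two_mul]
  nth_rw 2 [← reflect]
  rw [← sum_add_distrib, mul_sum]
  refine sum_congr rfl fun m hm ↦ ?_
  obtain ⟨one_le, lt⟩ := mem_Ico.mp hm
  rw [inv_pow_add_inv_pow_of_odd (hu m hm) (hu (n - m) (mem_Ico.mpr (by omega))) hs,
    ← Nat.cast_add, Nat.add_sub_cancel' lt.le]

end Reflection

section Prime

variable {p : ℕ} [Fact p.Prime]

theorem coprime_of_mem_Ico_one {m : ℕ} (hm : m ∈ Ico 1 p) : p.Coprime m :=
  Nat.coprime_of_lt_prime (Nat.ne_zero_of_lt (mem_Ico.mp hm).1) (mem_Ico.mp hm).2 Fact.out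

theorem sum_Ico_one_zmod_eq_sum_units {M : Type*} [AddCommMonoid M] (f : ZMod p → M) :
    ∑ m ∈ Ico 1 p, f m = ∑ x : (ZMod p)ˣ, f x := by
  refine sum_bij' (fun m hm ↦ ZMod.unitOfCoprime m (coprime_of_mem_Ico_one hm).symm)
    (fun x _ ↦ (x : ZMod p).val) (fun _ _ ↦ mem_univ _) (fun x _ ↦ ?_) (fun m hm ↦ ?_)
    (fun x _ ↦ ?_) (fun m hm ↦ ?_)
  · exact mem_Ico.mpr ⟨ZMod.val_pos.mpr x.ne_zero, ZMod.val_lt _⟩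
  · rw [ZMod.coe_unitOfCoprime, ZMod.val_cast_of_lt (mem_Ico.mp hm).2]
  · rw [Units.ext_iff, ZMod.coe_unitOfCoprime, ZMod.natCast_zmod_val]
  · rw [ZMod.coe_unitOfCoprime]

theorem sum_Ico_one_zmod_inv_pow_eq_zero {k : ℕ} (hk : ¬ p - 1 ∣ k) :
    ∑ m ∈ Ico 1 p, ((m : ZMod p)⁻¹) ^ k = 0 := by
  calc ∑ m ∈ Ico 1 p, ((m : ZMod p)⁻¹) ^ k
      = ∑ x : (ZMod p)ˣ, ((x : ZMod p)⁻¹) ^ k :=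
        sum_Ico_one_zmod_eq_sum_units fun x ↦ x⁻¹ ^ k
    _ = ∑ x : (ZMod p)ˣ, (x : ZMod p) ^ k := by
      simp only [← Units.val_inv_eq_inv_val]
      exact Equiv.sum_comp (Equiv.inv (ZMod p)ˣ) fun x ↦ (x : ZMod p) ^ k
    _ = 0 := by rw [FiniteField.sum_pow_units, ZMod.card, if_neg hk]

theorem padicInt_norm_natCast_eq_one_of_mem_Ico {m : ℕ} (hm : m ∈ Ico 1 p) :
    ‖(m : ℤ_[p])‖ = 1 :=
  PadicInt.norm_natCast_eq_one_iff.mpr (coprime_of_mem_Ico_one hm)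

theorem padicInt_coe_inv {x : ℤ_[p]} (hx : ‖x‖ = 1) : (x.inv : ℚ_[p]) = (x : ℚ_[p])⁻¹ :=
  eq_inv_of_mul_eq_one_right (by exact_mod_cast congrArg _ (PadicInt.mul_inv hx))

theorem padicInt_toZMod_inv {x : ℤ_[p]} (hx : ‖x‖ = 1) :
    PadicInt.toZMod x.inv = (PadicInt.toZMod x)⁻¹ :=
  eq_inv_of_mul_eq_one_right (by rw [← map_mul, PadicInt.mul_inv hx, map_one])

theorem padicInt_prime_dvd_iff_toZMod_eq_zero {x : ℤ_[p]} :
    (p : ℤ_[p]) ∣ x ↔ PadicInt.toZMod x = 0 := by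
  rw [← RingHom.mem_ker, PadicInt.ker_toZMod, PadicInt.maximalIdeal_eq_span_p,
    Ideal.mem_span_singleton]

theorem prime_dvd_sum_Ico_inv_mul_geom_sum {s : ℕ} (hps : ¬ p - 1 ∣ s + 1) :
    (p : ℤ_[p]) ∣ ∑ m ∈ Ico 1 p, (m : ℤ_[p]).inv * ((p - m : ℕ) : ℤ_[p]).inv *
      ∑ i ∈ range s, (m : ℤ_[p]).inv ^ i * (-((p - m : ℕ) : ℤ_[p]).inv) ^ (s - 1 - i) := by
  have toZMod_inv {m : ℕ} (hm : m ∈ Ico 1 p) :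
      PadicInt.toZMod (m : ℤ_[p]).inv = (m : ZMod p)⁻¹ := by
    rw [padicInt_toZMod_inv (padicInt_norm_natCast_eq_one_of_mem_Ico hm), map_natCast]
  have toZMod_inv_reflect {m : ℕ} (hm : m ∈ Ico 1 p) :
      PadicInt.toZMod ((p - m : ℕ) : ℤ_[p]).inv = -(m : ZMod p)⁻¹ := by
    obtain ⟨one_le, lt⟩ := mem_Ico.mp hm
    rw [toZMod_inv (mem_Ico.mpr (by omega)), Nat.cast_sub lt.le, CharP.cast_eq_zero, zero_sub,
      inv_neg]
  rw [padicInt_prime_dvd_iff_toZMod_eq_zero, map_sum]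
  calc _ = ∑ m ∈ Ico 1 p, (-s : ZMod p) * ((m : ZMod p)⁻¹) ^ (s + 1) := by
        refine sum_congr rfl fun m hm ↦ ?_
        rw [map_mul, map_mul, RingHom.map_geom_sum₂, map_neg, toZMod_inv hm,
          toZMod_inv_reflect hm, neg_neg, geom_sum₂_self]
        cases s with
        | zero => rw [Nat.cast_zero, neg_zero, zero_mul, zero_mul, mul_zero]
        | succ k =>
          rw [Nat.add_sub_cancel]
          ring
    _ = 0 := by rw [← mul_sum, sum_Ico_one_zmod_inv_pow_eq_zero hps, mul_zero]

theorem prime_sq_dvd_sum_Ico_inv_pow {s : ℕ} (hs : Odd s) (hps : ¬ p - 1 ∣ s + 1) :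
    (p : ℤ_[p]) ^ 2 ∣ ∑ m ∈ Ico 1 p, (m : ℤ_[p]).inv ^ s := by
  have two_lt : 2 < p := by
    refine (Fact.out : p.Prime).two_le.lt_of_ne ?_
    rintro rfl
    exact hps (one_dvd _)
  have not_dvd_two : ¬ (p : ℤ_[p]) ∣ 2 := by
    rw [padicInt_prime_dvd_iff_toZMod_eq_zero, map_ofNat]
    have : Fact (2 < p) := ⟨two_lt⟩
    exact Ring.two_ne_zero (by rw [ZMod.ringChar_zmod_n]; exact two_lt.ne')
  refine PadicInt.prime_p.pow_dvd_of_dvd_mul_left 2 not_dvd_two ?_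
  rw [two_mul_sum_Ico_inv_pow
    (fun m hm ↦ PadicInt.mul_inv (padicInt_norm_natCast_eq_one_of_mem_Ico hm)) hs, sq]
  exact mul_dvd_mul_left _ (prime_dvd_sum_Ico_inv_mul_geom_sum hps)

theorem padic_MHS_singleton (s : ℕ) :
    ((MHS (p - 1) [s] : ℚ) : ℚ_[p]) = (∑ m ∈ Ico 1 p, (m : ℤ_[p]).inv ^ s : ℤ_[p]) := by
  have Icc_eq_Ico : Icc 1 (p - 1) = Ico 1 p :=
    Icc_pred_right_eq_Ico_of_not_isMin (not_isMin_of_lt (Fact.out : p.Prime).pos) 1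
  rw [MHS_singleton, Icc_eq_Ico, Rat.cast_sum, PadicInt.coe_sum]
  refine sum_congr rfl fun m hm ↦ ?_
  rw [PadicInt.coe_pow, padicInt_coe_inv (padicInt_norm_natCast_eq_one_of_mem_Ico hm),
    PadicInt.coe_natCast, Rat.cast_pow, Rat.cast_inv, Rat.cast_natCast]

end Prime

theorem wolstenholme_general (p : ℕ) [Fact p.Prime] {s : ℕ} (hs : Odd s)
    (hps : ¬ p - 1 ∣ s + 1) :
    ‖((MHS (p - 1) [s] : ℚ) : ℚ_[p])‖ ≤ (p : ℝ) ^ (-2 : ℤ) := by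
  rw [padic_MHS_singleton, ← PadicInt.norm_def]
  exact (PadicInt.norm_le_pow_iff_mem_span_pow _ 2).mpr
    (Ideal.mem_span_singleton.mpr (prime_sq_dvd_sum_Ico_inv_pow hs hps))

/-- **Wolstenholme's Theorem.** For every prime `p ≥ 5`, the `p`-adic valuation of
`H_{p-1}(1)` is at least `2`. -/
theorem wolstenholme (p : ℕ) [Fact p.Prime] (hp : 5 ≤ p) :
    ‖((MHS (p - 1) [1] : ℚ) : ℚ_[p])‖ ≤ (p : ℝ) ^ (-2 : ℤ) := by
  exact wolstenholme_general p odd_one (Nat.not_dvd_of_pos_of_lt two_pos (by omega))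
end

section
/- There exists N such that for every prime p ≥ N, the homogeneous weighted congruence 3 H_{p−1}(1,4) − H_{p−1}(2,3) − H_{p−1}(3,2) + 3 H_{p−1}(4,1) + 2 H_{p−1}(5) ≡ 0 (mod p⁵) holds; that is, the p-adic valuation of the left-hand side is at least 5. -/
/-!
By the stuffle relation, the combination of double sums for odd exponents `s`, `t` (here `1`, `3`)
equals `t H(s) H(t+1) - s H(t) H(s+1)`, where `H = H_{p-1}`.
Replacing `k` by `p - k` and expanding `1 / (p - k)^s = (-1)^s k^{-s} (1 - p/k)^{-s}` in powers of
`p/k` expresses `H(s)` through itself and `H(s+1), H(s+2), …`. For odd `s` this gives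
`2 H(s) + s p H(s+1) ≡ 0 (mod p⁴)`, because `H(s+2) ≡ 0 (mod p²)` and `H(s+3) ≡ 0 (mod p)`.
The congruences for `s` and `t`, multiplied by `t H(t+1)` and `s H(s+1)`, which are
divisible by `p`, have the same second term; subtracting them gives the claim modulo `p⁵`.
-/

open Finset

section Stuffle

theorem MHS_nil (n : ℕ) : MHS n [] = 1 := by
  rw [MHS]

theorem MHS_cons_succ (n s : ℕ) (t : List ℕ) :
    MHS (n + 1) (s :: t) = MHS n (s :: t) + 1 / ((n + 1 : ℕ) : ℚ) ^ s * MHS n t := by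
  rw [MHS, MHS, sum_Icc_succ_top (by lia), Nat.add_sub_cancel]

theorem MHS_mul_MHS (n a b : ℕ) :
    MHS n [a] * MHS n [b] = MHS n [a, b] + MHS n [b, a] + MHS n [a + b] := by
  induction n with
  | zero => simp [MHS]
  | succ n ih =>
    simp only [MHS_cons_succ, MHS_nil, mul_one, pow_add, ← one_div_mul_one_div]
    linear_combination ih

end Stuffle

section Expansion

variable {R : Type*} [CommRing R]

theorem one_sub_mul_sum_multichoose_mul_pow (z : R) (s n : ℕ) :
    (1 - z) * ∑ j ∈ range (n + 1), ((s + 1).multichoose j : R) * z ^ j =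
      ∑ j ∈ range (n + 1), (s.multichoose j : R) * z ^ j
        - ((s + 1).multichoose n : R) * z ^ (n + 1) := by
  induction n with
  | zero => simp
  | succ n ih =>
    have pascal : ((s + 1).multichoose (n + 1) : R) =
        s.multichoose (n + 1) + (s + 1).multichoose n := by
      rw [Nat.multichoose_succ_succ, Nat.cast_add]
    rw [sum_range_succ, sum_range_succ _ (n + 1)]
    linear_combination ih + z ^ (n + 1) * pascal

theorem pow_dvd_pow_sub_neg_pow_mul_sum_multichoose {q x y : R} (h : y * (1 - q * x) = -x)
    (s N : ℕ) :
    q ^ N ∣ y ^ s - (-x) ^ s * ∑ j ∈ range N, (s.multichoose j : R) * (q * x) ^ j := by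
  obtain _ | n := N
  · simp
  induction s with
  | zero => simp [sum_range_succ']
  | succ s ih =>
    have succ_eq : y ^ (s + 1)
          - (-x) ^ (s + 1) * ∑ j ∈ range (n + 1), ((s + 1).multichoose j : R) * (q * x) ^ j =
        y * (y ^ s - (-x) ^ s * ∑ j ∈ range (n + 1), (s.multichoose j : R) * (q * x) ^ j)
          + q ^ (n + 1) * (y * (-x) ^ s * (s + 1).multichoose n * x ^ (n + 1)) := by
      rw [pow_succ (-x)]
      linear_combination
        (-x) ^ s * (∑ j ∈ range (n + 1), ((s + 1).multichoose j : R) * (q * x) ^ j) * h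
          - (-x) ^ s * y * one_sub_mul_sum_multichoose_mul_pow (q * x) s n
    rw [succ_eq]
    exact dvd_add (ih.mul_left y) (dvd_mul_right _ _)

end Expansion

section InvPowSum

/-- The power sum `H_{n-1}(s) = ∑_{0 < k < n} 1 / k^s` in a ring `R`. It is meaningful when
`1, …, n - 1` are units of `R`: `Ring.inverse` sends non-units to `0`. The range is indexed by `n`
rather than `n - 1` so that `k ↦ n - k` is its symmetry. -/
noncomputable def invPowSum (R : Type*) [Semiring R] (n s : ℕ) : R :=
  ∑ k ∈ Ico 1 n, Ring.inverse (k : R) ^ s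

theorem MHS_sub_one_singleton (n s : ℕ) : MHS (n - 1) [s] = invPowSum ℚ n s := by
  have Icc_eq_Ico : Icc 1 (n - 1) = Ico 1 n := by grind
  simp only [MHS, mul_one, invPowSum, Ring.inverse_eq_inv, one_div, inv_pow, Icc_eq_Ico]

theorem map_invPowSum {R S : Type*} [Semiring R] [Semiring S] {n : ℕ} (f : R →+* S)
    (hn : ∀ k ∈ Ico 1 n, IsUnit (k : R)) (s : ℕ) :
    f (invPowSum R n s) = invPowSum S n s := by
  simp only [invPowSum, map_sum, map_pow]
  refine sum_congr rfl fun k hk => congrArg (· ^ s) ?_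
  obtain ⟨u, hu⟩ := hn k hk
  have coe_map_u : ((Units.map f u : Sˣ) : S) = k := by simp [hu]
  rw [← hu, ← coe_map_u, Ring.inverse_unit, Ring.inverse_unit, ← map_inv]
  rfl

theorem invPowSum_reflect {R : Type*} [Semiring R] (n s : ℕ) :
    ∑ k ∈ Ico 1 n, Ring.inverse ((n - k : ℕ) : R) ^ s = invPowSum R n s := by
  simpa [invPowSum] using sum_Ico_reflect (fun k => Ring.inverse (k : R) ^ s) 1 n.le_succ

variable {R : Type*} [CommRing R] {n : ℕ}

theorem inverse_sub_mul_one_sub (hn : ∀ k ∈ Ico 1 n, IsUnit (k : R)) {k : ℕ} (hk : k ∈ Ico 1 n) :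
    Ring.inverse ((n - k : ℕ) : R) * (1 - n * Ring.inverse (k : R)) = -Ring.inverse (k : R) := by
  have hk' := mem_Ico.mp hk
  have inverse_mul_k := Ring.inverse_mul_cancel _ (hn k hk)
  have inverse_mul_sub := Ring.inverse_mul_cancel _ (hn (n - k) (mem_Ico.mpr (by lia)))
  have cast_sub : ((n - k : ℕ) : R) = n - k := Nat.cast_sub hk'.2.le
  linear_combination (-Ring.inverse ((n - k : ℕ) : R)) * inverse_mul_k
    - Ring.inverse (k : R) * inverse_mul_sub
    + Ring.inverse ((n - k : ℕ) : R) * Ring.inverse (k : R) * cast_sub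

theorem pow_dvd_invPowSum_sub_sum_multichoose (hn : ∀ k ∈ Ico 1 n, IsUnit (k : R)) (s N : ℕ) :
    (n : R) ^ N ∣ invPowSum R n s
      - (-1) ^ s * ∑ j ∈ range N, (s.multichoose j : R) * n ^ j * invPowSum R n (s + j) := by
  have termwise : invPowSum R n s
        - (-1) ^ s * ∑ j ∈ range N, (s.multichoose j : R) * n ^ j * invPowSum R n (s + j) =
      ∑ k ∈ Ico 1 n, (Ring.inverse ((n - k : ℕ) : R) ^ s - (-Ring.inverse (k : R)) ^ s *
        ∑ j ∈ range N, (s.multichoose j : R) * (n * Ring.inverse (k : R)) ^ j) := by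
    rw [sum_sub_distrib, invPowSum_reflect]
    simp only [invPowSum, mul_sum]
    rw [sum_comm]
    congr! 3
    ring
  rw [termwise]
  exact dvd_sum fun k hk =>
    pow_dvd_pow_sub_neg_pow_mul_sum_multichoose (inverse_sub_mul_one_sub hn hk) s N

end InvPowSum

section Padic

theorem ne_two_of_not_sub_one_dvd {n m : ℕ} (h : ¬ n - 1 ∣ m) : n ≠ 2 := by
  rintro rfl
  exact h (one_dvd m)

variable {p : ℕ} [Fact p.Prime] {s t : ℕ}

theorem isUnit_natCast_padicInt {k : ℕ} (hk : k ∈ Ico 1 p) : IsUnit (k : ℤ_[p]) := by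
  rw [mem_Ico] at hk
  rw [PadicInt.isUnit_iff, PadicInt.norm_natCast_eq_one_iff]
  exact Nat.coprime_of_lt_prime (by lia) hk.2 Fact.out

theorem invPowSum_zmod_eq_zero (hs : ¬ p - 1 ∣ s) : invPowSum (ZMod p) p s = 0 := by
  have sum_units : ∑ u : (ZMod p)ˣ, ((u : ZMod p) ^ s) = 0 := by
    rw [FiniteField.sum_pow_units, ZMod.card, if_neg hs]
  rw [← sum_units, ← Equiv.sum_comp (Equiv.inv (ZMod p)ˣ)]
  simp only [invPowSum, Ring.inverse_eq_inv, Equiv.inv_apply, Units.val_inv_eq_inv_val]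
  exact sum_bij'
    (fun k hk => Units.mk0 (k : ZMod p) (mt (ZMod.natCast_eq_zero_iff k p).mp
      (Nat.not_dvd_of_pos_of_lt (mem_Ico.mp hk).1 (mem_Ico.mp hk).2)))
    (fun u _ => (u : ZMod p).val)
    (fun _ _ => mem_univ _)
    (fun u _ => mem_Ico.mpr ⟨ZMod.val_pos.mpr u.ne_zero, ZMod.val_lt _⟩)
    (fun k hk => by simp [ZMod.val_cast_of_lt (mem_Ico.mp hk).2])
    (fun u _ => Units.ext (ZMod.natCast_zmod_val _))
    (fun _ _ => rfl)

theorem dvd_invPowSum (hs : ¬ p - 1 ∣ s) : (p : ℤ_[p]) ∣ invPowSum ℤ_[p] p s := by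
  rw [← Ideal.mem_span_singleton, ← PadicInt.maximalIdeal_eq_span_p, ← PadicInt.ker_toZMod,
    RingHom.mem_ker, map_invPowSum _ (fun _ => isUnit_natCast_padicInt), invPowSum_zmod_eq_zero hs]

theorem isUnit_two_padicInt (hp : p ≠ 2) : IsUnit (2 : ℤ_[p]) := by
  have two_lt : 2 < p := lt_of_le_of_ne (Fact.out : p.Prime).two_le hp.symm
  exact_mod_cast isUnit_natCast_padicInt (k := 2) (mem_Ico.mpr ⟨one_le_two, two_lt⟩)

theorem sq_dvd_invPowSum_of_odd (hs : Odd s) (hs₁ : ¬ p - 1 ∣ s + 1) :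
    (p : ℤ_[p]) ^ 2 ∣ invPowSum ℤ_[p] p s := by
  obtain ⟨a, ha⟩ := dvd_invPowSum hs₁
  obtain ⟨c, hc⟩ :=
    pow_dvd_invPowSum_sub_sum_multichoose (fun _ => isUnit_natCast_padicInt (p := p)) s 2
  simp only [sum_range_succ, range_zero, sum_empty, hs.neg_one_pow, Nat.multichoose_zero_right,
    Nat.multichoose_one_right, Nat.cast_one, add_zero] at hc
  rw [← (isUnit_two_padicInt (ne_two_of_not_sub_one_dvd hs₁)).dvd_mul_left]
  exact ⟨c - s * a, by linear_combination hc - s * p * ha⟩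

theorem pow_four_dvd_two_mul_invPowSum_add (hs : Odd s) (hs₃ : ¬ p - 1 ∣ s + 3) :
    (p : ℤ_[p]) ^ 4 ∣ 2 * invPowSum ℤ_[p] p s + s * p * invPowSum ℤ_[p] p (s + 1) := by
  obtain ⟨a, ha⟩ := sq_dvd_invPowSum_of_odd (hs.add_even even_two) hs₃
  obtain ⟨b, hb⟩ := dvd_invPowSum hs₃
  obtain ⟨c, hc⟩ :=
    pow_dvd_invPowSum_sub_sum_multichoose (fun _ => isUnit_natCast_padicInt (p := p)) s 4
  simp only [sum_range_succ, range_zero, sum_empty, hs.neg_one_pow, Nat.multichoose_zero_right,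
    Nat.multichoose_one_right, Nat.cast_one, add_zero] at hc
  exact ⟨c - s.multichoose 2 * a - s.multichoose 3 * b, by
    linear_combination hc - s.multichoose 2 * p ^ 2 * ha - s.multichoose 3 * p ^ 3 * hb⟩

theorem pow_five_dvd_invPowSum_mul_sub (hs : Odd s) (ht : Odd t)
    (hs₁ : ¬ p - 1 ∣ s + 1) (hs₃ : ¬ p - 1 ∣ s + 3)
    (ht₁ : ¬ p - 1 ∣ t + 1) (ht₃ : ¬ p - 1 ∣ t + 3) :
    (p : ℤ_[p]) ^ 5 ∣ t * (invPowSum ℤ_[p] p s * invPowSum ℤ_[p] p (t + 1))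
      - s * (invPowSum ℤ_[p] p (s + 1) * invPowSum ℤ_[p] p t) := by
  have s_term := mul_dvd_mul (pow_four_dvd_two_mul_invPowSum_add hs hs₃) (dvd_invPowSum ht₁)
  have t_term := mul_dvd_mul (pow_four_dvd_two_mul_invPowSum_add ht ht₃) (dvd_invPowSum hs₁)
  rw [← (isUnit_two_padicInt (ne_two_of_not_sub_one_dvd hs₁)).dvd_mul_left, pow_succ]
  convert dvd_sub (s_term.mul_left (t : ℤ_[p])) (t_term.mul_left (s : ℤ_[p])) using 1
  ring

theorem cast_MHS_singleton (s : ℕ) :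
    ((MHS (p - 1) [s] : ℚ) : ℚ_[p]) = (invPowSum ℤ_[p] p s : ℤ_[p]) := by
  have rat_units (k : ℕ) (hk : k ∈ Ico 1 p) : IsUnit (k : ℚ) :=
    (Nat.cast_ne_zero.mpr (Nat.one_le_iff_ne_zero.mp (mem_Ico.mp hk).1)).isUnit
  calc ((MHS (p - 1) [s] : ℚ) : ℚ_[p])
      = Rat.castHom ℚ_[p] (invPowSum ℚ p s) := by rw [MHS_sub_one_singleton]; rfl
    _ = invPowSum ℚ_[p] p s := map_invPowSum _ rat_units s
    _ = PadicInt.Coe.ringHom (invPowSum ℤ_[p] p s) :=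
        (map_invPowSum _ (fun _ => isUnit_natCast_padicInt) s).symm

theorem homogeneous_weighted_congruence_weight_five_general (hs : Odd s) (ht : Odd t)
    (hs₁ : ¬ p - 1 ∣ s + 1) (hs₃ : ¬ p - 1 ∣ s + 3)
    (ht₁ : ¬ p - 1 ∣ t + 1) (ht₃ : ¬ p - 1 ∣ t + 3) :
    ‖((t * MHS (p - 1) [s, t + 1] - s * MHS (p - 1) [s + 1, t] - s * MHS (p - 1) [t, s + 1]
        + t * MHS (p - 1) [t + 1, s] + (t - s) * MHS (p - 1) [s + t + 1] : ℚ) : ℚ_[p])‖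
      ≤ (p : ℝ) ^ (-5 : ℤ) := by
  have stuffle : t * MHS (p - 1) [s, t + 1] - s * MHS (p - 1) [s + 1, t]
        - s * MHS (p - 1) [t, s + 1] + t * MHS (p - 1) [t + 1, s]
        + (t - s) * MHS (p - 1) [s + t + 1] =
      t * (MHS (p - 1) [s] * MHS (p - 1) [t + 1])
        - s * (MHS (p - 1) [s + 1] * MHS (p - 1) [t]) := by
    rw [MHS_mul_MHS, MHS_mul_MHS, ← add_assoc s t 1, add_right_comm s 1 t]
    ring
  have norm_le := (PadicInt.norm_le_pow_iff_mem_span_pow _ 5).mpr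
    (Ideal.mem_span_singleton.mpr (pow_five_dvd_invPowSum_mul_sub hs ht hs₁ hs₃ ht₁ ht₃))
  rw [stuffle]
  push_cast [cast_MHS_singleton]
  exact_mod_cast norm_le

end Padic

/-- There exists `N` such that for every prime `p ≥ N`, the `p`-adic valuation of
`3 H_{p-1}(1,4) − H_{p-1}(2,3) − H_{p-1}(3,2) + 3 H_{p-1}(4,1) + 2 H_{p-1}(5)`
is at least `5`. -/
theorem homogeneous_weighted_congruence_weight_five :
    ∃ N : ℕ, ∀ p : ℕ, (hp : p.Prime) → N ≤ p →
      haveI : Fact p.Prime := ⟨hp⟩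
      ‖((3 * MHS (p - 1) [1, 4] - MHS (p - 1) [2, 3] - MHS (p - 1) [3, 2]
          + 3 * MHS (p - 1) [4, 1] + 2 * MHS (p - 1) [5] : ℚ) : ℚ_[p])‖
        ≤ (p : ℝ) ^ (-5 : ℤ) := by
  refine ⟨8, fun p hp hp8 => ?_⟩
  have : Fact p.Prime := ⟨hp⟩
  have not_dvd {m : ℕ} (hm : 0 < m) (hm7 : m < 7) : ¬ p - 1 ∣ m :=
    Nat.not_dvd_of_pos_of_lt hm (by lia)
  convert homogeneous_weighted_congruence_weight_five_general (p := p) (s := 1) (t := 3)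
    (by decide) (by decide) (not_dvd _ _) (not_dvd _ _) (not_dvd _ _) (not_dvd _ _) using 3
  all_goals norm_num
end

section
/- Let α be a ℚ-valued function on the set of compositions, and suppose there is a positive integer k such that for every composition 𝐬 the denominator of α(𝐬) is k-th power free (no prime q satisfies q^k ∣ denominator of α(𝐬)). Then: (i) for every prime p, the family 𝐬 ↦ α(𝐬) · p^{w(𝐬)} · H_{p−1}(𝐬), indexed by all compositions, is summable in ℚ_p, with sum a_p; (ii) for all but finitely many primes p, a_p ∈ ℤ_p; and (iii) for every positive integer n, for all but finitely many primes p, a_p − ∑_{𝐬 : w(𝐬) < n} α(𝐬) · p^{w(𝐬)} · H_{p−1}(𝐬) ∈ p^n ℤ_p. -/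
/-- The weight `w(𝐬) = s₁ + ⋯ + s_k` of a composition, a composition being a finite (possibly
empty) list of positive integers. -/
def compWeight (s : List ℕ+) : ℕ := (s.map fun i => (i : ℕ)).sum

/-- The weighted term `α(𝐬) p^{w(𝐬)} H_{p−1}(𝐬)`, viewed in `ℚ_p`. -/
noncomputable def weightedTerm (α : List ℕ+ → ℚ) (p : ℕ) [Fact p.Prime] (s : List ℕ+) : ℚ_[p] :=
  ((α s : ℚ) : ℚ_[p]) * (p : ℚ_[p]) ^ compWeight s *
    ((MHS (p - 1) (s.map fun i => (i : ℕ)) : ℚ) : ℚ_[p])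

/-!
For `n < p` the sum `H_n(𝐬)` has only denominators prime to `p`, so the term at `𝐬` has norm at most
`p ^ (k - w(𝐬))` once `p ^ (k + 1)` does not divide the denominator of `α(𝐬)`. As only finitely many
compositions have a given weight, the terms tend to zero, which suffices for summability in `ℚ_p`.

This bound falls short of `p ^ (-n)` only for the finitely many `𝐬` with `w(𝐬) < n + k`. Their
coefficients are `p`-integral for all but finitely many `p`, and then the bound holds with `k = 0`.
-/

open Filter

section Ultrametric

variable {ι E : Type*} [NormedAddCommGroup E] [IsUltrametricDist E] {f : ι → E}

theorem summable_of_norm_le_mul_pow [CompleteSpace E] {w : ι → ℕ}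
    (hw : Tendsto w cofinite atTop) {C r : ℝ} (hr₀ : 0 ≤ r) (hr₁ : r < 1)
    (hf : ∀ i, ‖f i‖ ≤ C * r ^ w i) : Summable f := by
  have hpow : Tendsto (fun i => r ^ w i) cofinite (nhds 0) :=
    (tendsto_pow_atTop_nhds_zero_of_lt_one hr₀ hr₁).comp hw
  exact NonarchimedeanAddGroup.summable_of_tendsto_cofinite_zero <|
    squeeze_zero_norm hf (by simpa only [mul_zero] using hpow.const_mul C)

theorem norm_tsum_sub_tsum_ite_le (hf : Summable f) {P : ι → Prop} [DecidablePred P]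
    (hP : {i | P i}.Finite) {C : ℝ} (hC : 0 ≤ C) (hle : ∀ i, ¬ P i → ‖f i‖ ≤ C) :
    ‖∑' i, f i - ∑' i, (if P i then f i else 0)‖ ≤ C := by
  have hite : Summable fun i => if P i then f i else 0 :=
    summable_of_hasFiniteSupport <| hP.subset fun i hi => by_contra fun hPi => hi (if_neg hPi)
  rw [← hf.tsum_sub hite]
  refine IsUltrametricDist.norm_tsum_le_of_forall_le_of_nonneg hC fun i => ?_
  split_ifs with hPi
  · rwa [sub_self, norm_zero]
  · rw [sub_zero]
    exact hle i hPi

end Ultrametric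

theorem finite_setOf_dvd_den {ι : Type*} {S : Set ι} (hS : S.Finite) (a : ι → ℚ) :
    {m : ℕ | ∃ i ∈ S, m ∣ (a i).den}.Finite := by
  refine (hS.biUnion fun i _ => (a i).den.divisors.finite_toSet).subset ?_
  rintro m ⟨i, hi, hm⟩
  exact Set.mem_biUnion hi (Nat.mem_divisors.2 ⟨hm, (a i).den_ne_zero⟩)

theorem compWeight_cons (i : ℕ+) (s : List ℕ+) : compWeight (i :: s) = i + compWeight s := by
  simp [compWeight]

theorem finite_setOf_compWeight_lt (N : ℕ) : {s : List ℕ+ | compWeight s < N}.Finite := by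
  induction N with
  | zero => simp only [not_lt_zero, Set.ofPred_false, Set.finite_empty]
  | succ N ih =>
    have hhead : {i : ℕ+ | (i : ℕ) ≤ N}.Finite :=
      (Set.finite_Iic N).preimage PNat.coe_injective.injOn
    refine ((hhead.image2 List.cons ih).insert []).subset fun s hs => ?_
    cases s with
    | nil => exact Set.mem_insert _ _
    | cons i t =>
      have hsum : (i : ℕ) + compWeight t < N + 1 := by rwa [← compWeight_cons]
      have hi : 0 < (i : ℕ) := i.pos
      exact .inr ⟨i, show (i : ℕ) ≤ N by omega, t, show compWeight t < N by omega, rfl⟩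

theorem tendsto_compWeight_cofinite_atTop : Tendsto compWeight cofinite atTop :=
  tendsto_atTop.2 fun N => eventually_cofinite.2 <| by
    simpa only [not_le] using finite_setOf_compWeight_lt N

section Padic

variable {p : ℕ} [hp : Fact p.Prime]

theorem norm_ratCast_le_pow {k : ℕ} {q : ℚ} (hq : ¬ p ^ (k + 1) ∣ q.den) :
    ‖(q : ℚ_[p])‖ ≤ (p : ℝ) ^ k := by
  have hp₀ : (0 : ℝ) < p := mod_cast hp.out.pos
  have hden : (p : ℝ) ^ (-k : ℤ) ≤ ‖(q.den : ℚ_[p])‖ := by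
    have hnot : ¬ ‖((q.den : ℤ) : ℚ_[p])‖ ≤ (p : ℝ) ^ (-(k + 1 : ℕ) : ℤ) := by
      rw [Padic.norm_int_le_pow_iff_dvd]
      exact_mod_cast hq
    rw [Padic.norm_le_pow_iff_norm_lt_pow_add_one, not_lt] at hnot
    simpa using hnot
  have hmul : (q : ℚ_[p]) * q.den = q.num := mod_cast Rat.mul_den_eq_num q
  have hle : ‖(q : ℚ_[p])‖ * (p : ℝ) ^ (-k : ℤ) ≤ 1 :=
    calc ‖(q : ℚ_[p])‖ * (p : ℝ) ^ (-k : ℤ) ≤ ‖(q : ℚ_[p])‖ * ‖(q.den : ℚ_[p])‖ := by gcongr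
      _ = ‖(q.num : ℚ_[p])‖ := by rw [← norm_mul, hmul]
      _ ≤ 1 := Padic.norm_int_le_one q.num
  rwa [zpow_neg, zpow_natCast, ← div_eq_mul_inv, div_le_one (by positivity)] at hle

theorem norm_MHS_le_one {n : ℕ} (hn : n < p) (s : List ℕ) : ‖(MHS n s : ℚ_[p])‖ ≤ 1 := by
  induction s generalizing n with
  | nil => simp only [MHS, Rat.cast_one, norm_one, le_refl]
  | cons i t ih =>
    rw [MHS, Rat.cast_sum]
    refine IsUltrametricDist.norm_sum_le_of_forall_le_of_nonneg zero_le_one fun m hm => ?_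
    obtain ⟨hm₁, hmn⟩ := Finset.mem_Icc.1 hm
    have hunit : ‖(m : ℚ_[p])‖ = 1 :=
      Padic.norm_natCast_eq_one_iff.2 (Nat.coprime_of_lt_prime (by omega) (by omega) hp.out)
    have htail : ‖(MHS (m - 1) t : ℚ_[p])‖ ≤ 1 := ih (by omega)
    push_cast
    rwa [norm_mul, norm_div, norm_pow, hunit, one_pow, norm_one, div_one, one_mul]

variable {α : List ℕ+ → ℚ} {k : ℕ}

theorem norm_weightedTerm_le {s : List ℕ+} (hs : ¬ p ^ (k + 1) ∣ (α s).den) :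
    ‖weightedTerm α p s‖ ≤ (p : ℝ) ^ ((k : ℤ) - compWeight s) := by
  have hp₀ : (p : ℝ) ≠ 0 := mod_cast hp.out.ne_zero
  rw [weightedTerm, norm_mul, norm_mul, Padic.norm_p_pow]
  calc _ ≤ (p : ℝ) ^ k * (p : ℝ) ^ (-compWeight s : ℤ) * 1 := by
        gcongr
        · exact norm_ratCast_le_pow hs
        · exact norm_MHS_le_one (Nat.sub_lt hp.out.pos one_pos) _
    _ = (p : ℝ) ^ ((k : ℤ) - compWeight s) := by
        rw [mul_one, sub_eq_add_neg, zpow_add₀ hp₀, zpow_natCast]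

theorem summable_weightedTerm (hα : ∀ s, ¬ p ^ (k + 1) ∣ (α s).den) :
    Summable (weightedTerm α p) := by
  have hp₁ : (1 : ℝ) < p := mod_cast hp.out.one_lt
  refine summable_of_norm_le_mul_pow (C := (p : ℝ) ^ k) tendsto_compWeight_cofinite_atTop
    (by positivity) (inv_lt_one_of_one_lt₀ hp₁) fun s => (norm_weightedTerm_le (hα s)).trans_eq ?_
  rw [zpow_sub₀ (by positivity), zpow_natCast, zpow_natCast, inv_pow, div_eq_mul_inv]

theorem norm_tsum_weightedTerm_sub_le {n : ℕ} (hα : ∀ s, ¬ p ^ (k + 1) ∣ (α s).den)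
    (hlow : ∀ s, compWeight s < n + k → ¬ p ∣ (α s).den) :
    ‖(∑' s, weightedTerm α p s) - ∑' s, (if compWeight s < n then weightedTerm α p s else 0)‖
      ≤ (p : ℝ) ^ (-n : ℤ) := by
  have hp₁ : (1 : ℝ) ≤ p := mod_cast hp.out.one_le
  refine norm_tsum_sub_tsum_ite_le (summable_weightedTerm hα) (finite_setOf_compWeight_lt n)
    (by positivity) fun s hs => ?_
  obtain hlt | hge := lt_or_ge (compWeight s) (n + k)
  · have hint : ¬ p ^ (0 + 1) ∣ (α s).den := by simpa only [zero_add, pow_one] using hlow s hlt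
    exact (norm_weightedTerm_le hint).trans (zpow_le_zpow_right₀ hp₁ (by omega))
  · exact (norm_weightedTerm_le (hα s)).trans (zpow_le_zpow_right₀ hp₁ (by omega))

end Padic

/-- Let `α` be a `ℚ`-valued function on compositions, and suppose there is a positive integer `k`
such that the denominator of each `α(𝐬)` is `k`-th power free.  Then:
(i) for every prime `p`, the family `𝐬 ↦ α(𝐬) p^{w(𝐬)} H_{p−1}(𝐬)` is summable in `ℚ_p`;
(ii) for all but finitely many primes `p`, its sum `a_p` lies in `ℤ_p` (i.e. `‖a_p‖ ≤ 1`);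
(iii) for every positive integer `n`, for all but finitely many primes `p`,
`a_p − ∑_{w(𝐬)<n} α(𝐬) p^{w(𝐬)} H_{p−1}(𝐬) ∈ p^n ℤ_p`. -/
theorem weighted_mhs_summable (α : List ℕ+ → ℚ) (k : ℕ) (hk : 0 < k)
    (hden : ∀ s : List ℕ+, ∀ q : ℕ, q.Prime → ¬ q ^ k ∣ (α s).den) :
    (∀ (p : ℕ) [Fact p.Prime], Summable (weightedTerm α p)) ∧
    {p : ℕ | ∃ hp : p.Prime,
      haveI : Fact p.Prime := ⟨hp⟩
      ¬ ‖∑' s : List ℕ+, weightedTerm α p s‖ ≤ 1}.Finite ∧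
    (∀ n : ℕ, 0 < n →
      {p : ℕ | ∃ hp : p.Prime,
        haveI : Fact p.Prime := ⟨hp⟩
        ¬ ‖(∑' s : List ℕ+, weightedTerm α p s) -
              ∑' s : List ℕ+, (if compWeight s < n then weightedTerm α p s else 0)‖
            ≤ (p : ℝ) ^ (-(n : ℤ))}.Finite) := by
  have hden' (p : ℕ) (hp : p.Prime) (s : List ℕ+) : ¬ p ^ (k + 1) ∣ (α s).den :=
    fun h => hden s p hp ((pow_dvd_pow p k.le_succ).trans h)
  have htail (n : ℕ) : {p : ℕ | ∃ hp : p.Prime,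
      haveI : Fact p.Prime := ⟨hp⟩
      ¬ ‖(∑' s, weightedTerm α p s) - ∑' s, (if compWeight s < n then weightedTerm α p s else 0)‖
          ≤ (p : ℝ) ^ (-(n : ℤ))}.Finite := by
    refine (finite_setOf_dvd_den (finite_setOf_compWeight_lt (n + k)) α).subset ?_
    rintro p ⟨hp, hnorm⟩
    have : Fact p.Prime := ⟨hp⟩
    by_contra hgood
    exact hnorm <| norm_tsum_weightedTerm_sub_le (hden' p hp) fun s hs hdvd => hgood ⟨s, hs, hdvd⟩
  refine ⟨fun p hp => summable_weightedTerm (hden' p hp.out), ?_, fun n _ => htail n⟩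
  simpa only [not_lt_zero, if_false, tsum_zero, sub_zero, Nat.cast_zero, neg_zero, zpow_zero]
    using htail 0
end

section
/- Let R be a topological commutative ring admitting a decreasing sequence of open ideals I₀ ⊇ I₁ ⊇ I₂ ⊇ ⋯ that forms a neighborhood basis of 0, such that each quotient ring R/I_n is Noetherian. Then for every closed ideal I of R there exists a sequence (α_n)_{n≥1} of elements of I with α_n → 0 such that I equals the topological closure of the ideal generated by {α₁, α₂, α₃, …}. -/
/-!
Let `V 0, V 1, …` be submodules of `M` forming a neighborhood basis of `0`, and filter a submodule
`N` by `N ⊓ V 0 ⊓ ⋯ ⊓ V (n - 1)`. The `n`-th graded piece of this filtration embeds into the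
Noetherian module `M ⧸ V n`, so finitely many elements of the `n`-th term generate it modulo the
next one. Listing these finite sets one after another gives a null sequence in `N` whose span,
enlarged by any `V n`, contains `N`; hence the span is dense in `N`.
-/

open Filter Topology
open scoped Pointwise

lemma exists_seq_range_eq_iUnion_of_tendsto_smallSets {ι X : Type*} [Countable ι] [Infinite ι]
    {l : Filter X} {F : ι → Set X} (hfin : ∀ i, (F i).Finite) (hne : ∀ i, (F i).Nonempty)
    (hF : Tendsto F cofinite l.smallSets) :
    ∃ α : ℕ → X, Set.range α = ⋃ i, F i ∧ Tendsto α atTop l := by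
  have (i : ι) : Finite (F i) := hfin i
  have (i : ι) : Nonempty (F i) := (hne i).to_subtype
  have : Infinite (Σ i, F i) := .of_surjective Sigma.fst Sigma.fst_surjective
  obtain ⟨_⟩ := nonempty_denumerable (Σ i, F i)
  let e : ℕ ≃ Σ i, F i := (Denumerable.eqv _).symm
  have hfst : Tendsto (Sigma.fst : (Σ i, F i) → ι) cofinite cofinite :=
    .cofinite_of_finite_preimage_singleton fun i ↦ by
      rw [← Set.range_sigmaMk]
      exact Set.finite_range _
  have hval : Tendsto (fun x : Σ i, F i ↦ (x.2 : X)) cofinite l :=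
    (hF.comp hfst).of_smallSets (.of_forall fun x ↦ x.2.2)
  refine ⟨fun n ↦ (e n).2, ?_, ?_⟩
  · calc Set.range (fun n ↦ ((e n).2 : X))
      _ = Set.range (fun x : Σ i, F i ↦ (x.2 : X)) :=
        e.surjective.range_comp fun x : Σ i, F i ↦ (x.2 : X)
      _ = ⋃ i, F i := by simp only [Set.range_sigma_eq_iUnion_range, Subtype.range_coe]
  · rw [← Nat.cofinite_eq_atTop]
    exact hval.comp e.injective.tendsto_cofinite

lemma le_sup_of_forall_le_sup_succ {L : Type*} [SemilatticeSup L] {K : ℕ → L} {a : L}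
    (h : ∀ n, K n ≤ a ⊔ K (n + 1)) (n : ℕ) : K 0 ≤ a ⊔ K n := by
  induction n with
  | zero => exact le_sup_right
  | succ n ih => exact ih.trans (sup_le le_sup_left (h n))

lemma subset_closure_of_forall_subset_add {ι : Sort*} {G : Type*} [AddGroup G]
    [TopologicalSpace G] [IsTopologicalAddGroup G] {p : ι → Prop} {U : ι → Set G}
    (hU : (𝓝 0).HasBasis p U) {s t : Set G} (h : ∀ i, p i → s ⊆ U i + t) : s ⊆ closure t := by
  intro x hx
  have hx_basis : (𝓝 x).HasBasis p fun i ↦ (fun y ↦ x - y) ⁻¹' U i := by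
    rw [(Homeomorph.subLeft x).isInducing.nhds_eq_comap x, Homeomorph.subLeft_apply, sub_self]
    exact hU.comap _
  rw [mem_closure_iff_nhds_basis hx_basis]
  intro i hi
  obtain ⟨z, hz, y, hy, rfl⟩ := h i hi hx
  exact ⟨y, hy, by simpa using hz⟩

lemma isNoetherian_of_surjective_algebraMap {R S M : Type*} [CommSemiring R] [Semiring S]
    [Algebra R S] [AddCommMonoid M] [Module R M] [Module S M] [IsScalarTower R S M]
    [IsNoetherian S M] (h : Function.Surjective (algebraMap R S)) : IsNoetherian R M := by
  have : RingHomSurjective (algebraMap R S) := ⟨h⟩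
  let e : M →ₛₗ[algebraMap R S] M := ⟨.id M, fun r x ↦ (algebraMap_smul S r x).symm⟩
  exact (e.isNoetherian_iff_of_bijective Function.bijective_id).2 ‹_›

section Module

variable {R M : Type*} [Ring R] [AddCommGroup M] [Module R M]

lemma exists_finite_subset_le_span_sup_ker {P : Type*} [AddCommGroup P] [Module R P]
    {f : M →ₗ[R] P} {N : Submodule R M} (hN : (N.map f).FG) :
    ∃ S : Set M, S.Finite ∧ S ⊆ N ∧ N ≤ Submodule.span R S ⊔ f.ker := by
  classical
  rw [← N.span_eq, Submodule.map_span, Submodule.fg_span_iff_fg_span_finset_subset] at hN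
  obtain ⟨T, hTN, hT⟩ := hN
  obtain ⟨S, hSN, rfl⟩ := Finset.subset_set_image_iff.1 hTN
  refine ⟨S, S.finite_toSet, hSN, ?_⟩
  rw [← Submodule.comap_map_eq, ← Submodule.map_le_iff_le_comap, Submodule.map_span,
    ← Finset.coe_image, ← hT, ← Submodule.map_span, N.span_eq]

lemma exists_finite_subset_inf_iInf_lt_le_span_iUnion_sup {V : ℕ → Submodule R M}
    (hV : ∀ n, IsNoetherian R (M ⧸ V n)) (N : Submodule R M) :
    ∃ F : ℕ → Set M, (∀ n, (F n).Finite) ∧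
      (∀ n, F n ⊆ (N ⊓ ⨅ k < n, V k : Submodule R M)) ∧
      ∀ n, N ≤ Submodule.span R (⋃ i, F i) ⊔ V n := by
  let K (n : ℕ) : Submodule R M := N ⊓ ⨅ k < n, V k
  have hK_succ (n : ℕ) : K (n + 1) = K n ⊓ V n := by
    simp only [K, Nat.iInf_lt_succ, inf_assoc]
  have hgen (n : ℕ) : ∃ S : Set M, S.Finite ∧ S ⊆ K n ∧ K n ≤ Submodule.span R S ⊔ V n := by
    simpa only [Submodule.ker_mkQ] using
      exists_finite_subset_le_span_sup_ker (IsNoetherian.noetherian ((K n).map (V n).mkQ))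
  choose F hfin hFK hF using hgen
  refine ⟨F, hfin, hFK, fun n ↦ ?_⟩
  have hstep (n : ℕ) : K n ≤ Submodule.span R (⋃ i, F i) ⊔ K (n + 1) :=
    calc K n
      _ ≤ (Submodule.span R (F n) ⊔ V n) ⊓ K n := le_inf (hF n) le_rfl
      _ ≤ Submodule.span R (F n) ⊔ V n ⊓ K n :=
        sup_inf_le_assoc_of_le _ (Submodule.span_le.2 (hFK n))
      _ = Submodule.span R (F n) ⊔ K (n + 1) := by rw [hK_succ, inf_comm]
      _ ≤ Submodule.span R (⋃ i, F i) ⊔ K (n + 1) :=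
        sup_le_sup_right (Submodule.span_mono (Set.subset_iUnion F n)) _
  calc N
    _ = K 0 := by simp [K]
    _ ≤ Submodule.span R (⋃ i, F i) ⊔ K (n + 1) := le_sup_of_forall_le_sup_succ hstep (n + 1)
    _ ≤ Submodule.span R (⋃ i, F i) ⊔ V n :=
      sup_le_sup_left ((hK_succ n).trans_le inf_le_right) _

theorem closed_ideal_eq_closure_of_span_of_null_sequence_general [TopologicalSpace M]
    [IsTopologicalAddGroup M] {V : ℕ → Submodule R M}
    (hV : (𝓝 (0 : M)).HasBasis (fun _ ↦ True) fun n ↦ (V n : Set M))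
    (hnoeth : ∀ n, IsNoetherian R (M ⧸ V n)) (N : Submodule R M) :
    ∃ α : ℕ → M, (∀ n, α n ∈ N) ∧ Tendsto α atTop (𝓝 0) ∧
      closure (N : Set M) = closure (Submodule.span R (Set.range α) : Set M) := by
  obtain ⟨F, hfin, hFN, hNF⟩ := exists_finite_subset_inf_iInf_lt_le_span_iUnion_sup hnoeth N
  let G (n : ℕ) : Set M := insert 0 (F n)
  have hGN (n : ℕ) : G n ⊆ (N ⊓ ⨅ k < n, V k : Submodule R M) :=
    Set.insert_subset (zero_mem _) (hFN n)
  have hG : Tendsto G cofinite (𝓝 0).smallSets := by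
    rw [Nat.cofinite_eq_atTop, hV.smallSets.tendsto_right_iff]
    intro m _
    filter_upwards [eventually_gt_atTop m] with n hmn
    exact (hGN n).trans (SetLike.coe_subset_coe.2 (inf_le_right.trans (iInf₂_le m hmn)))
  obtain ⟨α, hrange, hα⟩ := exists_seq_range_eq_iUnion_of_tendsto_smallSets
    (fun n ↦ (hfin n).insert 0) (fun n ↦ Set.insert_nonempty 0 (F n)) hG
  have hαN : Set.range α ⊆ N :=
    hrange.trans_subset (Set.iUnion_subset fun n ↦ (hGN n).trans inf_le_left)
  have hFα : ⋃ n, F n ⊆ Set.range α :=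
    (Set.iUnion_mono fun n ↦ Set.subset_insert 0 (F n)).trans_eq hrange.symm
  have hdense : (N : Set M) ⊆ closure (Submodule.span R (Set.range α)) :=
    subset_closure_of_forall_subset_add hV fun n _ ↦ by
      rw [← Submodule.coe_sup, sup_comm]
      exact (hNF n).trans (sup_le_sup_right (Submodule.span_mono hFα) _)
  exact ⟨α, fun n ↦ hαN ⟨n, rfl⟩, hα, (closure_minimal hdense isClosed_closure).antisymm
    (closure_mono (Submodule.span_le.2 hαN))⟩

end Module

/-- Let `R` be a topological commutative ring with a decreasing sequence of open ideals
`I 0 ⊇ I 1 ⊇ ⋯` forming a neighborhood basis of `0`, with each quotient `R ⧸ I n` Noetherian.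
Then every closed ideal `J` of `R` is the closure of an ideal generated by a sequence of elements
of `J` tending to `0`. -/
theorem closed_ideal_eq_closure_of_span_of_null_sequence
    {R : Type*} [CommRing R] [TopologicalSpace R] [IsTopologicalRing R]
    (I : ℕ → Ideal R) (hdec : ∀ n, I (n + 1) ≤ I n)
    (hopen : ∀ n, IsOpen (I n : Set R))
    (hbasis : (nhds (0 : R)).HasBasis (fun _ : ℕ => True) fun n => (I n : Set R))
    (hnoeth : ∀ n, IsNoetherianRing (R ⧸ I n))
    (J : Ideal R) (hJ : IsClosed (J : Set R)) :
    ∃ α : ℕ → R, (∀ n, α n ∈ J) ∧ Filter.Tendsto α Filter.atTop (nhds 0) ∧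
      (J : Set R) = closure (Ideal.span (Set.range α) : Set R) := by
  have hnoeth' (n : ℕ) : IsNoetherian R (R ⧸ I n) :=
    isNoetherian_of_surjective_algebraMap (S := R ⧸ I n) Ideal.Quotient.mk_surjective
  simpa only [hJ.closure_eq] using
    closed_ideal_eq_closure_of_span_of_null_sequence_general hbasis hnoeth' J
end

section
/- Let p be an odd prime and let k ≥ r ≥ 0 be natural numbers. Then the following identity holds in ℚ: C(kp, rp) = C(k, r) · ∏_{j=1, p ∤ j}^{rp−1} (1 − kp/j), where the product is over the integers j with 1 ≤ j ≤ rp−1 not divisible by p. -/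
/-!
Absorption gives `C(x, n) = (x / n) C(x - 1, n - 1)`, and `C(x - 1, n - 1)` is the product of the
factors `x / j - 1` over `1 ≤ j ≤ n - 1`. For `C(xp, rp)` the factors with `j = ip` are
`xp / (ip) - 1 = x / i - 1`, so together with `xp / (rp) = x / r` they form `C(x, r)`. The
`r (p - 1)` remaining factors change sign when written as `1 - xp / j`, and their number is even
when `p` is odd.
-/

open Finset

theorem prod_filter_dvd_Icc {M : Type*} [CommMonoid M] (f : ℕ → M) (d n : ℕ) :
    ∏ j ∈ Icc 1 n with d ∣ j, f j = ∏ i ∈ Icc 1 (n / d), f (i * d) := by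
  simp only [prod_filter]
  induction n with
  | zero => simp
  | succ n ih =>
    rw [prod_Icc_succ_top n.succ_pos, ih, Nat.succ_div]
    split_ifs with hd
    · have hmul : (n / d + 1) * d = n + 1 := by
        rw [← Nat.succ_div_of_dvd hd, Nat.div_mul_cancel hd]
      rw [prod_Icc_succ_top (n / d).succ_pos, hmul]
    · rw [mul_one, add_zero]

theorem card_filter_not_dvd_Icc (d n : ℕ) : #{j ∈ Icc 1 n | ¬ d ∣ j} = n - n / d := by
  have hdvd : #{j ∈ Icc 1 n | d ∣ j} = n / d := Nat.Ioc_filter_dvd_card_eq_div n d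
  have hsplit := card_filter_add_card_filter_not (s := Icc 1 n) (d ∣ ·)
  rw [Nat.card_Icc] at hsplit
  omega

theorem mul_sub_one_div_right (r : ℕ) {p : ℕ} (hp : p ≠ 0) : (r * p - 1) / p = r - 1 := by
  obtain _ | s := r
  · simp
  · rw [Nat.mul_comm, Nat.mul_sub_div 0 p (s + 1) (by positivity), Nat.zero_div, zero_add]

section RingChoose

variable {K : Type*} [Field K] [CharZero K]

theorem ringChoose_eq_div_mul_sub_one (x : K) {n : ℕ} (hn : n ≠ 0) :
    Ring.choose x n = x / n * Ring.choose (x - 1) (n - 1) := by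
  obtain ⟨m, rfl⟩ := Nat.exists_eq_succ_of_ne_zero hn
  have habsorb : ((m + 1 : ℕ) : K) * Ring.choose x (m + 1) = x * Ring.choose (x - 1) m := by
    simpa only [Nat.choose_one_right, Nat.cast_one, sub_add_cancel, Ring.choose_one_right,
      nsmul_eq_mul] using Ring.choose_add_smul_choose (x - 1) m 1
  rw [div_mul_eq_mul_div, eq_div_iff (Nat.cast_ne_zero.mpr hn), mul_comm]
  exact habsorb

theorem ringChoose_sub_one_eq_prod (x : K) (n : ℕ) :
    Ring.choose (x - 1) n = ∏ j ∈ Icc 1 n, (x / j - 1) := by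
  induction n with
  | zero => simp
  | succ n ih =>
    have hn : ((n + 1 : ℕ) : K) ≠ 0 := Nat.cast_ne_zero.mpr n.succ_ne_zero
    have hstep : ((n + 1 : ℕ) : K) * Ring.choose (x - 1) (n + 1) =
        Ring.choose (x - 1) n * (x - 1 - n) := by
      simpa only [Nat.succ_eq_add_one, Nat.choose_succ_self_right, nsmul_eq_mul,
        Nat.add_sub_cancel_left, Ring.choose_one_right] using
        Ring.choose_smul_choose (x - 1) n.le_succ
    rw [prod_Icc_succ_top n.succ_pos, ← ih, ← mul_right_inj' hn, hstep, mul_left_comm,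
      mul_sub_one, mul_div_cancel₀ _ hn, Nat.cast_succ, sub_sub, add_comm 1 (n : K)]

theorem ringChoose_mul_natCast_eq_mul_prod (x : K) {p : ℕ} (hp : p ≠ 0) (r : ℕ) :
    Ring.choose (x * p) (r * p) =
      Ring.choose x r * ∏ j ∈ Icc 1 (r * p - 1) with ¬ p ∣ j, (x * p / j - 1) := by
  obtain rfl | hr := eq_or_ne r 0
  · simp
  have hpK : (p : K) ≠ 0 := Nat.cast_ne_zero.mpr hp
  have hmultiples : ∏ j ∈ Icc 1 (r * p - 1) with p ∣ j, (x * p / j - 1) =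
      Ring.choose (x - 1) (r - 1) := by
    rw [prod_filter_dvd_Icc, mul_sub_one_div_right r hp, ringChoose_sub_one_eq_prod]
    simp only [Nat.cast_mul, mul_div_mul_right _ _ hpK]
  calc Ring.choose (x * p) (r * p)
      = x * p / (r * p : ℕ) * ∏ j ∈ Icc 1 (r * p - 1), (x * p / j - 1) := by
        rw [ringChoose_eq_div_mul_sub_one _ (mul_ne_zero hr hp), ringChoose_sub_one_eq_prod]
    _ = x / r * (Ring.choose (x - 1) (r - 1) *
          ∏ j ∈ Icc 1 (r * p - 1) with ¬ p ∣ j, (x * p / j - 1)) := by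
        rw [Nat.cast_mul, mul_div_mul_right _ _ hpK, ← hmultiples, prod_filter_mul_prod_filter_not]
    _ = Ring.choose x r * ∏ j ∈ Icc 1 (r * p - 1) with ¬ p ∣ j, (x * p / j - 1) := by
        rw [← mul_assoc, ← ringChoose_eq_div_mul_sub_one x hr]

end RingChoose

theorem choose_mul_prime_eq_choose_mul_prod_general {K : Type*} [Field K] [CharZero K] (x : K)
    {p : ℕ} (hp : p ≠ 0) (r : ℕ) :
    Ring.choose (x * p) (r * p) = (-1) ^ (r * (p - 1)) *
      (Ring.choose x r * ∏ j ∈ Icc 1 (r * p - 1) with ¬ p ∣ j, (1 - x * p / j)) := by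
  have hcard : #{j ∈ Icc 1 (r * p - 1) | ¬ p ∣ j} = r * (p - 1) := by
    rw [card_filter_not_dvd_Icc, mul_sub_one_div_right r hp, Nat.mul_sub_one]
    obtain rfl | hr := Nat.eq_zero_or_pos r
    · simp
    have hle : r ≤ r * p := Nat.le_mul_of_pos_right r (Nat.pos_of_ne_zero hp)
    omega
  rw [ringChoose_mul_natCast_eq_mul_prod x hp, mul_left_comm, ← hcard, ← prod_neg]
  simp only [neg_sub]

/-- For an odd prime `p` and natural numbers `k ≥ r ≥ 0`,
`C(kp, rp) = C(k, r) ∏_{j=1, p∤j}^{rp−1} (1 − kp/j)` in `ℚ`. -/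
theorem choose_mul_prime_eq_choose_mul_prod (p : ℕ) (hp : p.Prime) (hodd : Odd p)
    (k r : ℕ) (hkr : r ≤ k) :
    ((k * p).choose (r * p) : ℚ) =
      (k.choose r : ℚ) *
        ∏ j ∈ (Finset.Icc 1 (r * p - 1)).filter fun j => ¬ p ∣ j,
          (1 - (k : ℚ) * (p : ℚ) / (j : ℚ)) := by
  have heven : Even (r * (p - 1)) := (hodd.tsub_odd odd_one).mul_left r
  have h := choose_mul_prime_eq_choose_mul_prod_general (k : ℚ) hp.ne_zero r
  rwa [heven.neg_one_pow, one_mul, ← Nat.cast_mul, Ring.choose_natCast, Ring.choose_natCast,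
    Nat.cast_mul] at h
end

section
/- Let p be an odd prime and let k ≥ r ≥ 0 be natural numbers. Then the following identity holds in ℚ: C(kp, rp) = C(k, r) · ∑_{n=0}^{r(p−1)} (−kp)^n · H^{(p)}_{rp}({1}^n), where H^{(p)}_{m}({1}^n) = ∑_{m ≥ n₁ > n₂ > ⋯ > n_n ≥ 1, p ∤ n_i for all i} 1/(n₁ n₂ ⋯ n_n) is the p-restricted multiple harmonic sum (with H^{(p)}_m({1}^0) = 1). -/
/-- The `p`-restricted multiple harmonic sum
`H^{(p)}_n(s₁,…,s_k) = ∑_{n ≥ n₁ > … > n_k ≥ 1, p ∤ nᵢ} 1/(n₁^{s₁} ⋯ n_k^{s_k})`,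
with `H^{(p)}_n(∅) = 1`. -/
def MHSres (p : ℕ) : ℕ → List ℕ → ℚ
  | _, [] => 1
  | n, s :: t =>
      ∑ m ∈ (Finset.Icc 1 n).filter fun m => ¬ p ∣ m, (1 / (m : ℚ) ^ s) * MHSres p (m - 1) t

/-!
Among the factors `x * p - i` of the falling factorial of length `r * p` at `x * p`, those with
`p ∣ i` are `p` times the factors of the falling factorial of length `r` at `x`. Dividing this
factorization by its instance at `x = r`, where the falling factorials are `(r * p)!` and `r !`,
shows that the ratio of the two binomial coefficients is the product of `(x * p - i) / i` over the
`i ≤ r * p` not divisible by `p`. Up to sign this is `∏ (1 - x * p / i)`, and the harmonic sums are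
the elementary symmetric functions of the `1 / i`.
-/

open Finset
open scoped Nat

/-- The natural numbers between `1` and `m` not divisible by `p`: the index set of the restricted
harmonic sums. -/
def nonMultiples (p m : ℕ) : Finset ℕ := {i ∈ Icc 1 m | ¬ p ∣ i}

section NonMultiples

variable {p m i : ℕ}

lemma mem_nonMultiples : i ∈ nonMultiples p m ↔ (1 ≤ i ∧ i ≤ m) ∧ ¬ p ∣ i := by
  simp only [nonMultiples, mem_filter, mem_Icc]

lemma nonMultiples_succ_of_dvd (h : p ∣ m + 1) : nonMultiples p (m + 1) = nonMultiples p m := by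
  rw [nonMultiples, ← insert_Icc_right_eq_Icc_add_one (by lia), filter_insert, if_neg (not_not.2 h),
    nonMultiples]

lemma nonMultiples_succ_of_not_dvd (h : ¬ p ∣ m + 1) :
    nonMultiples p (m + 1) = insert (m + 1) (nonMultiples p m) := by
  rw [nonMultiples, ← insert_Icc_right_eq_Icc_add_one (by lia), filter_insert, if_pos h,
    nonMultiples]

lemma succ_notMem_nonMultiples : m + 1 ∉ nonMultiples p m := by
  simp [mem_nonMultiples]

lemma cast_ne_zero_of_mem_nonMultiples {K : Type*} [AddMonoidWithOne K] [CharZero K]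
    (hi : i ∈ nonMultiples p m) : (i : K) ≠ 0 :=
  Nat.cast_ne_zero.2 (Nat.one_le_iff_ne_zero.1 (mem_nonMultiples.1 hi).1.1)

lemma card_nonMultiples (p m : ℕ) : #(nonMultiples p m) = m - m / p := by
  have hsplit := card_filter_add_card_filter_not (s := Ioc 0 m) (p ∣ ·)
  rw [Nat.Ioc_filter_dvd_card_eq_div, Nat.card_Ioc] at hsplit
  rw [nonMultiples, show Icc 1 m = Ioc 0 m from Icc_add_one_left_eq_Ioc 0 m]
  lia

lemma card_nonMultiples_mul (p r : ℕ) : #(nonMultiples p (r * p)) = r * (p - 1) := by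
  rw [card_nonMultiples]
  rcases p.eq_zero_or_pos with rfl | hp
  · simp
  · rw [Nat.mul_div_cancel r hp, Nat.mul_sub_one]

lemma prod_nonMultiples_reflect {M : Type*} [CommMonoid M] (h : p ∣ m) (f : ℕ → M) :
    ∏ i ∈ nonMultiples p m, f (m - i) = ∏ i ∈ nonMultiples p m, f i := by
  have reflect_mem : ∀ i ∈ nonMultiples p m, m - i ∈ nonMultiples p m := by
    intro i hi
    rw [mem_nonMultiples] at hi ⊢
    have hne : i ≠ m := fun him => hi.2 (him ▸ h)
    exact ⟨by lia, fun hd => hi.2 ((Nat.dvd_sub_iff_right hi.1.2 h).1 hd)⟩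
  refine prod_nbij' (m - ·) (m - ·) reflect_mem reflect_mem ?_ ?_ fun _ _ => rfl
  all_goals exact fun i hi => Nat.sub_sub_self (mem_nonMultiples.1 hi).1.2

lemma prod_range_mul_eq_prod_multiples_mul_prod_nonMultiples {M : Type*} [CommMonoid M]
    (hp : p ≠ 0) (r : ℕ) (f : ℕ → M) :
    ∏ i ∈ range (r * p), f i =
      (∏ j ∈ range r, f (j * p)) * ∏ i ∈ nonMultiples p (r * p), f i := by
  have multiples : {i ∈ range (r * p) | p ∣ i} = (range r).image (· * p) := by
    ext i
    simp only [mem_filter, mem_range, mem_image]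
    constructor
    · rintro ⟨hi, j, rfl⟩
      exact ⟨j, Nat.lt_of_mul_lt_mul_left (mul_comm r p ▸ hi), mul_comm j p⟩
    · rintro ⟨j, hj, rfl⟩
      exact ⟨Nat.mul_lt_mul_of_pos_right hj (Nat.pos_of_ne_zero hp), dvd_mul_left p j⟩
  have nonmultiples : {i ∈ range (r * p) | ¬ p ∣ i} = nonMultiples p (r * p) := by
    ext i
    rw [mem_filter, mem_range, mem_nonMultiples]
    refine and_congr_left fun hi => ?_
    have hzero : i ≠ 0 := fun h => hi (h ▸ dvd_zero p)
    have hlast : i ≠ r * p := fun h => hi (h ▸ dvd_mul_left p r)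
    lia
  rw [← prod_filter_mul_prod_filter_not (range (r * p)) (p ∣ ·), multiples, nonmultiples,
    prod_image fun _ _ _ _ h => Nat.eq_of_mul_eq_mul_right (Nat.pos_of_ne_zero hp) h]

end NonMultiples

section HarmonicSum

lemma sum_powersetCard_succ_insert_prod {ι R : Type*} [DecidableEq ι] [CommSemiring R]
    {s : Finset ι} {a : ι} (ha : a ∉ s) (n : ℕ) (f : ι → R) :
    ∑ t ∈ powersetCard (n + 1) (insert a s), ∏ i ∈ t, f i =
      ∑ t ∈ powersetCard (n + 1) s, ∏ i ∈ t, f i +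
        f a * ∑ t ∈ powersetCard n s, ∏ i ∈ t, f i := by
  have notMem : ∀ t ∈ powersetCard n s, a ∉ t := fun t ht hat => ha ((mem_powersetCard.1 ht).1 hat)
  have disjoint : Disjoint (powersetCard (n + 1) s) ((powersetCard n s).image (insert a)) := by
    refine disjoint_left.2 fun t ht ht' => ?_
    obtain ⟨u, -, rfl⟩ := mem_image.1 ht'
    exact ha ((mem_powersetCard.1 ht).1 (mem_insert_self a u))
  have injOn : Set.InjOn (insert a) (powersetCard n s : Set (Finset ι)) := fun t ht u hu htu => by
    rw [← erase_insert (notMem t ht), htu, erase_insert (notMem u hu)]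
  rw [powersetCard_succ_insert ha, sum_union disjoint, sum_image injOn, mul_sum]
  exact congrArg _ (sum_congr rfl fun t ht => prod_insert (notMem t ht))

lemma sum_pow_mul_sum_powersetCard_eq_prod_one_add {ι R : Type*} [CommSemiring R] (s : Finset ι)
    (f : ι → R) (x : R) :
    ∑ n ∈ range (#s + 1), x ^ n * ∑ t ∈ powersetCard n s, ∏ i ∈ t, f i =
      ∏ i ∈ s, (1 + x * f i) := by
  rw [prod_one_add, sum_powerset]
  refine sum_congr rfl fun n _ => ?_
  rw [mul_sum]
  refine sum_congr rfl fun t ht => ?_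
  rw [prod_mul_distrib, prod_const, (mem_powersetCard.1 ht).2]

lemma MHSres_succ_cons (p m s : ℕ) (t : List ℕ) :
    MHSres p (m + 1) (s :: t) =
      MHSres p m (s :: t) + if p ∣ m + 1 then 0 else 1 / ((m + 1 : ℕ) : ℚ) ^ s * MHSres p m t := by
  simp only [MHSres, sum_filter]
  rw [sum_Icc_succ_top (by lia), ite_not, Nat.add_sub_cancel]

lemma MHSres_replicate_one_eq_sum_powersetCard (p m n : ℕ) :
    MHSres p m (List.replicate n 1) =
      ∑ t ∈ powersetCard n (nonMultiples p m), ∏ i ∈ t, (i : ℚ)⁻¹ := by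
  induction m generalizing n with
  | zero =>
    cases n with
    | zero => simp [MHSres]
    | succ n =>
      have noSubsets : powersetCard (n + 1) (nonMultiples p 0) = ∅ :=
        powersetCard_eq_empty.2 (by simp [nonMultiples])
      simp [MHSres, List.replicate_succ, noSubsets]
  | succ m ih =>
    cases n with
    | zero => simp [MHSres]
    | succ n =>
      by_cases h : p ∣ m + 1
      · rw [List.replicate_succ, MHSres_succ_cons, if_pos h, add_zero, ← List.replicate_succ, ih,
          nonMultiples_succ_of_dvd h]
      · rw [List.replicate_succ, MHSres_succ_cons, if_neg h, ← List.replicate_succ, ih, ih,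
          nonMultiples_succ_of_not_dvd h,
          sum_powersetCard_succ_insert_prod succ_notMem_nonMultiples, pow_one, one_div]

lemma sum_pow_mul_MHSres_replicate_one {K : Type*} [Field K] [CharZero K] (p m : ℕ) (x : K) :
    ∑ n ∈ range (#(nonMultiples p m) + 1), x ^ n * (MHSres p m (List.replicate n 1) : K) =
      ∏ i ∈ nonMultiples p m, (1 + x / i) := by
  simp only [MHSres_replicate_one_eq_sum_powersetCard, div_eq_mul_inv, Rat.cast_sum, Rat.cast_prod,
    Rat.cast_inv, Rat.cast_natCast, sum_pow_mul_sum_powersetCard_eq_prod_one_add]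

end HarmonicSum

section Binomial

lemma descPochhammer_eval_mul {R : Type*} [CommRing R] {p : ℕ} (hp : p ≠ 0) (r : ℕ) (x : R) :
    (descPochhammer R (r * p)).eval (x * p) =
      p ^ r * (descPochhammer R r).eval x * ∏ i ∈ nonMultiples p (r * p), (x * p - i) := by
  have multiples : ∏ j ∈ range r, (x * p - ((j * p : ℕ) : R)) =
      p ^ r * (descPochhammer R r).eval x := by
    simp only [Nat.cast_mul, ← sub_mul, prod_mul_distrib, prod_const, card_range,
      descPochhammer_eval_eq_prod_range]
    exact mul_comm _ _
  rw [descPochhammer_eval_eq_prod_range,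
    prod_range_mul_eq_prod_multiples_mul_prod_nonMultiples hp, multiples]

lemma factorial_mul_eq_prod_nonMultiples {p : ℕ} (hp : p ≠ 0) (r : ℕ) :
    (r * p)! = p ^ r * r ! * ∏ i ∈ nonMultiples p (r * p), i := by
  have eval_self (n : ℕ) : (descPochhammer ℤ n).eval (n : ℤ) = n ! := by
    rw [descPochhammer_eval_eq_descFactorial, Nat.descFactorial_self]
  have eval_mul := descPochhammer_eval_mul hp r (r : ℤ)
  rw [← Nat.cast_mul, eval_self, eval_self,
    ← prod_congr rfl fun i hi => Nat.cast_sub (mem_nonMultiples.1 hi).1.2,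
    prod_nonMultiples_reflect (dvd_mul_left p r) fun i => (i : ℤ)] at eval_mul
  apply Nat.cast_injective (R := ℤ)
  push_cast
  exact eval_mul

variable {K : Type*} [Field K] [CharZero K]

lemma ring_choose_eq_descPochhammer_eval_div (x : K) (n : ℕ) :
    Ring.choose x n = (descPochhammer K n).eval x / n ! := by
  have eval_eq_smeval : (descPochhammer K n).eval x = (descPochhammer ℤ n).smeval x := by
    rw [← descPochhammer_map (Int.castRingHom K), Polynomial.eval_map,
      ← Polynomial.eval₂_smulOneHom_eq_smeval]
    congr 1
    exact RingHom.ext_int _ _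
  rw [Ring.choose_eq_smul, smul_eq_mul, inv_mul_eq_div, eval_eq_smeval]

lemma ring_choose_mul_eq_mul_prod_nonMultiples {p : ℕ} (hp : p ≠ 0) (r : ℕ) (x : K) :
    Ring.choose (x * p) (r * p) =
      Ring.choose x r * ∏ i ∈ nonMultiples p (r * p), (x * p - i) / i := by
  have p_pow_ne_zero : (p : K) ^ r ≠ 0 := pow_ne_zero r (Nat.cast_ne_zero.2 hp)
  rw [ring_choose_eq_descPochhammer_eval_div, ring_choose_eq_descPochhammer_eval_div,
    descPochhammer_eval_mul hp, factorial_mul_eq_prod_nonMultiples hp, prod_div_distrib,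
    Nat.cast_mul, Nat.cast_mul, Nat.cast_pow, Nat.cast_prod, mul_div_mul_comm,
    mul_div_mul_left _ _ p_pow_ne_zero]

theorem choose_mul_prime_eq_choose_mul_restricted_mhs_sum_general {p : ℕ} (hp : p ≠ 0)
    (r : ℕ) (x : K) :
    Ring.choose (x * p) (r * p) =
      (-1) ^ (r * (p - 1)) * Ring.choose x r *
        ∑ n ∈ range (r * (p - 1) + 1),
          (-(x * p)) ^ n * (MHSres p (r * p) (List.replicate n 1) : K) := by
  have factor : ∀ i ∈ nonMultiples p (r * p), (x * p - i) / i = -1 * (1 + -(x * p) / i) := by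
    intro i hi
    have i_ne_zero := cast_ne_zero_of_mem_nonMultiples (K := K) hi
    field_simp
    ring
  rw [ring_choose_mul_eq_mul_prod_nonMultiples hp, prod_congr rfl factor, prod_mul_distrib,
    prod_const, ← sum_pow_mul_MHSres_replicate_one, card_nonMultiples_mul]
  ring

end Binomial

/-- For an odd prime `p` and natural numbers `k ≥ r ≥ 0`,
`C(kp, rp) = C(k, r) ∑_{n=0}^{r(p−1)} (−kp)^n H^{(p)}_{rp}({1}^n)` in `ℚ`. -/
theorem choose_mul_prime_eq_choose_mul_restricted_mhs_sum (p : ℕ) (hp : p.Prime) (hodd : Odd p)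
    (k r : ℕ) (hkr : r ≤ k) :
    ((k * p).choose (r * p) : ℚ) =
      (k.choose r : ℚ) *
        ∑ n ∈ Finset.range (r * (p - 1) + 1),
          (-((k : ℚ) * (p : ℚ))) ^ n * MHSres p (r * p) (List.replicate n 1) := by
  simpa only [((hodd.tsub_odd odd_one).mul_left r).neg_one_pow, one_mul, ← Nat.cast_mul,
    Ring.choose_natCast, Rat.cast_id] using
    choose_mul_prime_eq_choose_mul_restricted_mhs_sum_general hp.ne_zero r (k : ℚ)
end

section
/- In the quotient ring 𝒜 = (∏_p ℤ/(p)) / (⊕_p ℤ/(p)), where the product and direct sum are taken over all primes p, the image of every nonzero integer m (under the diagonal map sending m to the class of the family (m mod p)_p) is a unit. Consequently 𝒜 is an algebra over ℚ. -/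
/-- The ideal `⊕_p ℤ/(p)` of finitely supported families inside the product ring
`∏_p ℤ/(p)`, the product being over all primes `p`. -/
def directSumIdeal : Ideal (∀ p : Nat.Primes, ZMod p) where
  carrier := {x | {p : Nat.Primes | x p ≠ 0}.Finite}
  zero_mem' := by
    simp only [Set.mem_setOf_eq, Pi.zero_apply, ne_eq, not_true_eq_false,
      Set.setOf_false, Set.finite_empty]
  add_mem' := by
    intro a b ha hb
    refine (ha.union hb).subset ?_
    intro q hq
    simp only [Set.mem_setOf_eq, Set.mem_union, Pi.add_apply] at *
    by_contra h
    push_neg at h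
    rw [h.1, h.2, add_zero] at hq
    exact hq rfl
  smul_mem' := by
    intro c a ha
    refine ha.subset ?_
    intro q hq
    simp only [Set.mem_setOf_eq, smul_eq_mul, Pi.mul_apply] at *
    intro h
    rw [h, mul_zero] at hq
    exact hq rfl

theorem isUnit_quotientMk_iff_mul_sub_one_mem {R : Type*} [CommRing R] (I : Ideal R) {a b : R}
    (hab : a * b * a = a) : IsUnit (Ideal.Quotient.mk I a) ↔ a * b - 1 ∈ I := by
  rw [← Ideal.Quotient.eq, map_mul, map_one]
  refine ⟨fun ha => ?_, IsUnit.of_mul_eq_one _⟩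
  -- `a * b` is an idempotent fixing `a`, so it becomes `1` once the class of `a` can be cancelled.
  rw [← ha.mul_left_inj, one_mul, ← map_mul, ← map_mul, hab]

theorem mem_directSumIdeal {x : ∀ p : Nat.Primes, ZMod p} :
    x ∈ directSumIdeal ↔ {p | x p ≠ 0}.Finite :=
  Iff.rfl

theorem isUnit_mk_directSumIdeal_iff {x : ∀ p : Nat.Primes, ZMod p} :
    IsUnit (Ideal.Quotient.mk directSumIdeal x) ↔ {p | x p = 0}.Finite := by
  have (p : Nat.Primes) : Fact (p : ℕ).Prime := ⟨p.2⟩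
  have weak_inverse : x * (fun p => (x p)⁻¹) * x = x := funext fun p => mul_inv_mul_cancel (x p)
  have support_eq : {p | (x * (fun p => (x p)⁻¹) - 1) p ≠ 0} = {p | x p = 0} := by
    ext p
    by_cases hp : x p = 0 <;> simp [hp]
  rw [isUnit_quotientMk_iff_mul_sub_one_mem _ weak_inverse, mem_directSumIdeal, support_eq]

theorem finite_setOf_intCast_zmod_eq_zero {m : ℤ} (hm : m ≠ 0) :
    {p : Nat.Primes | (m : ZMod p) = 0}.Finite := by
  refine (m.natAbs.primeFactors.finite_toSet.preimage
    Nat.Primes.coe_nat_injective.injOn).subset fun p hp => ?_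
  have p_dvd : (p : ℕ) ∣ m.natAbs :=
    Int.natCast_dvd.mp ((ZMod.intCast_zmod_eq_zero_iff_dvd m p).mp hp)
  exact Nat.mem_primeFactors.mpr ⟨p.2, p_dvd, Int.natAbs_ne_zero.mpr hm⟩

theorem nonempty_rat_ringHom_of_isUnit_intCast {R : Type*} [CommRing R]
    (h : ∀ m : ℤ, m ≠ 0 → IsUnit (m : R)) : Nonempty (ℚ →+* R) :=
  ⟨IsLocalization.lift (M := nonZeroDivisors ℤ) (g := Int.castRingHom R)
    fun m => h m (nonZeroDivisors.coe_ne_zero m)⟩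

/-- In the ring `𝒜 = (∏_p ℤ/(p)) / (⊕_p ℤ/(p))`, the image of every nonzero integer `m` under
the diagonal map is a unit; consequently `𝒜` admits the structure of a `ℚ`-algebra. -/
theorem int_diagonal_isUnit_and_rat_algebra :
    (∀ m : ℤ, m ≠ 0 →
      IsUnit (Ideal.Quotient.mk directSumIdeal (fun p : Nat.Primes => (m : ZMod p)))) ∧
    Nonempty (ℚ →+* ((∀ p : Nat.Primes, ZMod p) ⧸ directSumIdeal)) := by
  have isUnit_diagonal (m : ℤ) (hm : m ≠ 0) :
      IsUnit (Ideal.Quotient.mk directSumIdeal (fun p : Nat.Primes => (m : ZMod p))) :=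
    isUnit_mk_directSumIdeal_iff.mpr (finite_setOf_intCast_zmod_eq_zero hm)
  refine ⟨isUnit_diagonal, nonempty_rat_ringHom_of_isUnit_intCast fun m hm => ?_⟩
  rw [← map_intCast (Ideal.Quotient.mk directSumIdeal)]
  exact isUnit_diagonal m hm
end
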